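/- arXiv:math/0104238 — 2 statements merged into one kernel-verified Lean document; each statement's English description precedes it below -/
import Mathlib

section
/- For all radii 0 < R₁ ≤ R₂ there is a constant C = C(R₁,R₂) ≥ 1, which may be taken of the form e^{c₁R₂}·(R₂/R₁)^{c₂} for absolute constants c₁, c₂, such that: for every z₀ ∈ ℂ, every integer n ≥ 1, and every bivariate polynomial P ∈ ℂ[z,w] of total degree at most n with max_{|z−z₀|≤R₁} |P(z, e^z)| ≤ 1, one has |P(z, e^z)| ≤ C^{n²} for all z ∈ ℂ with |z−z₀| ≤ R₂. (Equivalently: the generalized Siciak extremal function Φ_K(z; V, φ), taken with K the closed disk of radius R₁ centred at z₀, V_n = {P(z,e^z) : deg P ≤ n}, and exponent function φ(n) = n², is bounded by C on the disk of radius R₂ centred at z₀.) -/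
/-!
Turán's method for exponential polynomials. The operator `Q(D) = ∏_{k ≤ n} (D - k) ^ (n + 1)`
annihilates `f z = P(z, e ^ z)`. Write `N = (n + 1) ^ 2` for its order, list its roots as
`ω₀, …, ω_{N - 1} ∈ [0, n]`, and consider the table
`u m j = (D ^ j (D - ω₀) ⋯ (D - ω_{m - 1}) f)(z₀)`. It satisfies
`u (m + 1) j = u m (j + 1) - ω_m * u m j`, which may be read in either direction. Cauchy's estimates
bound the row `m = 0`, hence the column `j = 0`, which vanishes from `m = N` on; and the column
bounds the row, i.e. the Taylor coefficients of `f`. Summed against `R ^ j / j!` this gives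
`|f| ≤ e ^ {n (R + r)} * ∑_{k < N} (R / r) ^ k` on the disk of radius `R`, which is of the right
order as soon as `2 r ≤ R`. Hadamard's three circles theorem covers the radii between `r` and `2 r`.
-/

open Finset Polynomial
open scoped Nat

section TriangularRecurrence

variable {u : ℕ → ℕ → ℝ} {Λ : ℝ}

lemma le_sum_antidiagonal_choose_mul_of_triangular (hΛ : 0 ≤ Λ)
    (hu : ∀ m j, u (m + 1) j ≤ u m (j + 1) + Λ * u m j) (m j : ℕ) :
    u m j ≤ ∑ ik ∈ antidiagonal m, (m.choose ik.1 : ℝ) * (u 0 (j + ik.1) * Λ ^ ik.2) := by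
  induction m generalizing j with
  | zero => simp
  | succ m ih =>
    rw [sum_antidiagonal_choose_succ_mul fun i k => u 0 (j + i) * Λ ^ k]
    have hstep :
        ∑ ik ∈ antidiagonal m, (m.choose ik.1 : ℝ) * (u 0 (j + ik.1) * Λ ^ (ik.2 + 1)) =
          Λ * ∑ ik ∈ antidiagonal m, (m.choose ik.1 : ℝ) * (u 0 (j + ik.1) * Λ ^ ik.2) := by
      rw [mul_sum]
      exact sum_congr rfl fun _ _ => by ring
    have hshift :
        ∑ ik ∈ antidiagonal m, (m.choose ik.2 : ℝ) * (u 0 (j + (ik.1 + 1)) * Λ ^ ik.2) =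
          ∑ ik ∈ antidiagonal m, (m.choose ik.1 : ℝ) * (u 0 (j + 1 + ik.1) * Λ ^ ik.2) := by
      refine sum_congr rfl fun ik hik => ?_
      rw [Nat.choose_symm_of_eq_add (mem_antidiagonal.1 hik).symm, add_right_comm, add_assoc]
    rw [hstep, hshift]
    linarith [hu m j, ih (j + 1), mul_le_mul_of_nonneg_left (ih j) hΛ]

lemma div_factorial_le_sum_antidiagonal_of_triangular (hΛ : 0 ≤ Λ)
    (hu : ∀ m j, u (m + 1) j ≤ u m (j + 1) + Λ * u m j) (m : ℕ) :
    u m 0 / m ! ≤ ∑ ik ∈ antidiagonal m, u 0 ik.1 / ik.1 ! * (Λ ^ ik.2 / ik.2 !) := by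
  rw [div_le_iff₀ (by positivity), sum_mul]
  refine (le_sum_antidiagonal_choose_mul_of_triangular hΛ hu m 0).trans_eq
    (sum_congr rfl fun ik hik => ?_)
  obtain rfl := mem_antidiagonal.1 hik
  rw [Nat.cast_add_choose, zero_add]
  field_simp

end TriangularRecurrence

section NewtonTable

/-- The left shift `(a 0, a 1, …) ↦ (a 1, a 2, …)`, through which a polynomial `Q` acts on sequences
as `aeval (shift R) Q`. On the sequence of derivatives of `f` at a point this is the action of the
differential operator `Q(D)`. -/
def shift (R : Type*) [CommSemiring R] : Module.End R (ℕ → R) :=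
  LinearMap.funLeft R R Nat.succ

@[simp]
lemma shift_apply {R : Type*} [CommSemiring R] (a : ℕ → R) (j : ℕ) : shift R a j = a (j + 1) :=
  rfl

/-- The table of Newton coordinates of the sequence `a` at the nodes `ω`: the row of index `m` is
`∏_{i < m} (S - ω i)` applied to `a`, where `S` is the shift. The row of index `0` is `a` itself. -/
noncomputable def newtonTable {R : Type*} [CommRing R] (ω a : ℕ → R) (m : ℕ) : ℕ → R :=
  aeval (shift R) (Lagrange.nodal (range m) ω) a

section CommRing

variable {R : Type*} [CommRing R]

@[simp]
lemma newtonTable_zero (ω a : ℕ → R) : newtonTable ω a 0 = a := by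
  simp [newtonTable]

lemma newtonTable_succ (ω a : ℕ → R) (m j : ℕ) :
    newtonTable ω a (m + 1) j = newtonTable ω a m (j + 1) - ω m * newtonTable ω a m j := by
  rw [newtonTable, Lagrange.nodal, prod_range_succ, mul_comm, map_mul, Module.End.mul_apply]
  simp [newtonTable, Lagrange.nodal]

lemma newtonTable_eq_zero_of_le {ω a : ℕ → R} {N m : ℕ} (hN : newtonTable ω a N = 0)
    (hm : N ≤ m) : newtonTable ω a m = 0 := by
  induction m, hm using Nat.le_induction with
  | base => exact hN
  | succ m _ ih => ext j; simp [newtonTable_succ, ih]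

end CommRing

variable {R : Type*} [SeminormedCommRing R] {ω a : ℕ → R} {Λ : ℝ}

lemma norm_newtonTable_succ_left_le (hω : ∀ i, ‖ω i‖ ≤ Λ) (m j : ℕ) :
    ‖newtonTable ω a (m + 1) j‖ ≤ ‖newtonTable ω a m (j + 1)‖ + Λ * ‖newtonTable ω a m j‖ := by
  rw [newtonTable_succ]
  exact norm_sub_le_of_le le_rfl (norm_mul_le_of_le (hω m) le_rfl)

lemma norm_newtonTable_succ_right_le (hω : ∀ i, ‖ω i‖ ≤ Λ) (m j : ℕ) :
    ‖newtonTable ω a m (j + 1)‖ ≤ ‖newtonTable ω a (m + 1) j‖ + Λ * ‖newtonTable ω a m j‖ := by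
  rw [← sub_add_cancel (newtonTable ω a m (j + 1)) (ω m * newtonTable ω a m j),
    ← newtonTable_succ]
  exact norm_add_le_of_le le_rfl (norm_mul_le_of_le (hω m) le_rfl)

lemma norm_newtonTable_div_factorial_le (hω : ∀ i, ‖ω i‖ ≤ Λ) {M r : ℝ} (hr : 0 < r)
    (ha : ∀ j, ‖a j‖ / j ! ≤ M / r ^ j) (m : ℕ) :
    ‖newtonTable ω a m 0‖ / m ! ≤ M * Real.exp (Λ * r) / r ^ m := by
  have hΛ : 0 ≤ Λ := (norm_nonneg _).trans (hω 0)
  have hM : 0 ≤ M := by simpa using (norm_nonneg _).trans (by simpa using ha 0)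
  calc ‖newtonTable ω a m 0‖ / m !
      ≤ ∑ ik ∈ antidiagonal m, ‖a ik.1‖ / ik.1 ! * (Λ ^ ik.2 / ik.2 !) := by
        simpa using div_factorial_le_sum_antidiagonal_of_triangular
          (u := fun m j => ‖newtonTable ω a m j‖) hΛ (norm_newtonTable_succ_left_le hω) m
    _ ≤ ∑ ik ∈ antidiagonal m, M / r ^ ik.1 * (Λ ^ ik.2 / ik.2 !) := by
        gcongr ∑ ik ∈ antidiagonal m, ?_ * (Λ ^ ik.2 / ik.2 !) with ik
        exact ha ik.1
    _ = ∑ ik ∈ antidiagonal m, M / r ^ m * ((Λ * r) ^ ik.2 / ik.2 !) := by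
        refine sum_congr rfl fun ik hik => ?_
        rw [← mem_antidiagonal.1 hik, pow_add, mul_pow]
        field_simp
    _ = M / r ^ m * ∑ k ∈ range (m + 1), (Λ * r) ^ k / k ! := by
        rw [← mul_sum, ← Nat.sum_antidiagonal_swap, Nat.sum_antidiagonal_eq_sum_range_succ_mk]
        rfl
    _ ≤ M / r ^ m * Real.exp (Λ * r) := by
        gcongr
        exact Real.sum_le_exp_of_nonneg (by positivity) _
    _ = M * Real.exp (Λ * r) / r ^ m := by ring

lemma norm_div_factorial_le_sum_antidiagonal_newtonTable (hω : ∀ i, ‖ω i‖ ≤ Λ) (j : ℕ) :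
    ‖a j‖ / j ! ≤
      ∑ ik ∈ antidiagonal j, ‖newtonTable ω a ik.1 0‖ / ik.1 ! * (Λ ^ ik.2 / ik.2 !) := by
  simpa using div_factorial_le_sum_antidiagonal_of_triangular
    (u := fun j m => ‖newtonTable ω a m j‖) ((norm_nonneg _).trans (hω 0))
    (fun j m => norm_newtonTable_succ_right_le hω m j) j

lemma exists_nodal_range_eq_multiset_prod (S : Multiset R) (hΛ : 0 ≤ Λ) (hS : ∀ x ∈ S, ‖x‖ ≤ Λ) :
    ∃ ω : ℕ → R, (∀ i, ‖ω i‖ ≤ Λ) ∧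
      Lagrange.nodal (range S.card) ω = (S.map fun x => X - C x).prod := by
  induction S using Multiset.induction with
  | empty => exact ⟨0, by simpa, by simp⟩
  | cons x S ih =>
    obtain ⟨hx, hS⟩ := Multiset.forall_mem_cons.1 hS
    obtain ⟨ω, hω, hprod⟩ := ih hS
    refine ⟨Function.update ω S.card x, fun i => ?_, ?_⟩
    · rcases eq_or_ne i S.card with rfl | hi
      · simpa
      · simpa [hi] using hω i
    · have hcongr : ∏ i ∈ range S.card, (X - C (Function.update ω S.card x i)) =
          ∏ i ∈ range S.card, (X - C (ω i)) :=
        prod_congr rfl fun i hi => by simp [(mem_range.1 hi).ne]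
      rw [Multiset.card_cons, Multiset.map_cons, Multiset.prod_cons, ← hprod, Lagrange.nodal,
        prod_range_succ, hcongr, Function.update_self, mul_comm, Lagrange.nodal]

end NewtonTable

section ThreeCircles

open Complex Complex.HadamardThreeLines Metric Set

theorem norm_le_interp_of_mem_annulus {E : Type*} [NormedAddCommGroup E] [NormedSpace ℂ E]
    {f : ℂ → E} {c z : ℂ} {r₁ r₂ a b : ℝ} (hr₁ : 0 < r₁) (hr : r₁ < r₂)
    (hd : DiffContOnCl ℂ f (ball c r₂ \ closedBall c r₁))
    (ha : ∀ z ∈ sphere c r₁, ‖f z‖ ≤ a) (hb : ∀ z ∈ sphere c r₂, ‖f z‖ ≤ b)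
    (hz₁ : r₁ ≤ ‖z - c‖) (hz₂ : ‖z - c‖ ≤ r₂) :
    ‖f z‖ ≤ a ^ (1 - Real.log (‖z - c‖ / r₁) / Real.log (r₂ / r₁)) *
      b ^ (Real.log (‖z - c‖ / r₁) / Real.log (r₂ / r₁)) := by
  have hr₂ : 0 < r₂ := hr₁.trans hr
  have hz : 0 < ‖z - c‖ := hr₁.trans_le hz₁
  set e : ℂ → ℂ := fun w => c + exp w
  have he : Differentiable ℂ e := differentiable_exp.const_add c
  have hdist (w : ℂ) : dist (e w) c = Real.exp w.re := by simp [e, dist_eq_norm, norm_exp]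
  have hmaps : MapsTo e (verticalStrip (Real.log r₁) (Real.log r₂))
      (ball c r₂ \ closedBall c r₁) := fun w hw => by
    rw [mem_sdiff, mem_ball, mem_closedBall, not_le, hdist, ← Real.lt_log_iff_exp_lt hr₂,
      ← Real.log_lt_iff_lt_exp hr₁]
    exact hw.symm
  have hbdd : BddAbove ((norm ∘ f ∘ e) '' verticalClosedStrip (Real.log r₁) (Real.log r₂)) := by
    have hcompact : IsCompact (closure (ball c r₂ \ closedBall c r₁)) :=
      (isBounded_ball.subset sdiff_subset).isCompact_closure
    refine (hcompact.bddAbove_image hd.continuousOn.norm).mono ?_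
    rw [verticalClosedStrip, ← closure_Ioo (Real.log_lt_log hr₁ hr).ne, ← closure_preimage_re]
    exact image_comp (norm ∘ f) e _ ▸ image_mono (hmaps.closure he.continuous).image_subset
  have hsphere {r : ℝ} (hr : 0 < r) {w : ℂ} (hw : w ∈ re ⁻¹' {Real.log r}) : e w ∈ sphere c r := by
    rw [mem_sphere, hdist, show w.re = Real.log r from hw, Real.exp_log hr]
  have hlog : log (z - c) ∈ verticalClosedStrip (Real.log r₁) (Real.log r₂) := by
    rw [verticalClosedStrip, Set.mem_preimage, log_re]
    exact ⟨Real.log_le_log hr₁ hz₁, Real.log_le_log hz hz₂⟩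
  have hinterp := norm_le_interp_of_mem_verticalClosedStrip' (Real.log_lt_log hr₁ hr) hlog
    (hd.comp he.diffContOnCl hmaps) hbdd (fun w hw => ha _ (hsphere hr₁ hw))
    (fun w hw => hb _ (hsphere hr₂ hw))
  rw [Real.log_div hz.ne' hr₁.ne', Real.log_div hr₂.ne' hr₁.ne']
  simpa [e, log_re, exp_log (norm_pos_iff.1 hz)] using hinterp

end ThreeCircles

section Jet

lemma nonneg_of_forall_mem_sphere_norm_le {E F : Type*} [NormedAddCommGroup E] [NormedSpace ℝ E]
    [Nontrivial E] [SeminormedAddGroup F] {f : E → F} {x : E} {M r : ℝ} (hr : 0 ≤ r)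
    (hM : ∀ y ∈ Metric.sphere x r, ‖f y‖ ≤ M) : 0 ≤ M :=
  let ⟨y, hy⟩ := NormedSpace.sphere_nonempty.2 hr
  (norm_nonneg _).trans (hM y hy)

/-- The sequence of derivatives of `f` at `z₀`, not divided by factorials, so that differentiating
`f` shifts the sequence. -/
noncomputable def jet (f : ℂ → ℂ) (z₀ : ℂ) : ℕ → ℂ :=
  fun j => iteratedDeriv j f z₀

lemma jet_zero (z₀ : ℂ) : jet (fun _ => 0) z₀ = 0 := by
  ext j
  simp [jet]

lemma jet_deriv (f : ℂ → ℂ) (z₀ : ℂ) : jet (deriv f) z₀ = shift ℂ (jet f z₀) := by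
  ext j
  simp [jet, iteratedDeriv_succ']

variable {f : ℂ → ℂ} {ω : ℕ → ℂ} {z₀ z : ℂ} {Λ M r : ℝ} {N : ℕ}

lemma norm_jet_div_factorial_le (hf : Differentiable ℂ f) (hr : 0 < r)
    (hM : ∀ z ∈ Metric.sphere z₀ r, ‖f z‖ ≤ M) (j : ℕ) : ‖jet f z₀ j‖ / j ! ≤ M / r ^ j := by
  rw [div_le_iff₀' (by positivity), ← mul_div_assoc]
  exact Complex.norm_iteratedDeriv_le_of_forall_mem_sphere_norm_le j hr hf.diffContOnCl hM

lemma norm_le_sum_newtonTable_mul_exp (hf : Differentiable ℂ f) (hω : ∀ i, ‖ω i‖ ≤ Λ)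
    (hN : newtonTable ω (jet f z₀) N = 0) (z : ℂ) :
    ‖f z‖ ≤ (∑ k ∈ range N, ‖newtonTable ω (jet f z₀) k 0‖ / k ! * ‖z - z₀‖ ^ k) *
      Real.exp (Λ * ‖z - z₀‖) := by
  set R := ‖z - z₀‖
  set c : ℕ → ℝ := fun k => ‖newtonTable ω (jet f z₀) k 0‖ / k ! * R ^ k
  have hc (k : ℕ) (hk : k ∉ range N) : c k = 0 := by
    simp [c, newtonTable_eq_zero_of_le hN (le_of_not_gt (mem_range.not.1 hk))]
  have hexp : Summable fun k : ℕ => (Λ * R) ^ k / k ! := Real.summable_pow_div_factorial _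
  have hprod : HasSum (fun j => ∑ ik ∈ antidiagonal j, c ik.1 * ((Λ * R) ^ ik.2 / ik.2 !))
      ((∑ k ∈ range N, c k) * Real.exp (Λ * R)) := by
    have hsum : Summable c := summable_of_ne_finset_zero hc
    have htsum : ∑' k, c k = ∑ k ∈ range N, c k := tsum_eq_sum hc
    rw [← htsum, Real.exp_eq_exp_ℝ, NormedSpace.exp_eq_tsum_div,
      tsum_mul_tsum_eq_tsum_sum_antidiagonal_of_summable_norm hsum.norm hexp.norm]
    exact (summable_norm_sum_mul_antidiagonal_of_summable_norm hsum.norm hexp.norm).of_norm.hasSum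
  rw [← Complex.taylorSeries_eq_of_entire' z₀ z hf]
  refine tsum_of_norm_bounded hprod fun j => ?_
  calc ‖(j ! : ℂ)⁻¹ * iteratedDeriv j f z₀ * (z - z₀) ^ j‖ = ‖jet f z₀ j‖ / j ! * R ^ j := by
        simp [jet, R, div_eq_inv_mul]
    _ ≤ (∑ ik ∈ antidiagonal j, ‖newtonTable ω (jet f z₀) ik.1 0‖ / ik.1 ! *
          (Λ ^ ik.2 / ik.2 !)) * R ^ j := by
        gcongr
        exact norm_div_factorial_le_sum_antidiagonal_newtonTable hω j
    _ = ∑ ik ∈ antidiagonal j, c ik.1 * ((Λ * R) ^ ik.2 / ik.2 !) := by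
        rw [sum_mul]
        refine sum_congr rfl fun ik hik => ?_
        rw [← mem_antidiagonal.1 hik, pow_add, mul_pow]
        ring

lemma norm_le_exp_mul_geom_sum_of_newtonTable_eq_zero
    (hf : Differentiable ℂ f) (hω : ∀ i, ‖ω i‖ ≤ Λ) (hN : newtonTable ω (jet f z₀) N = 0)
    (hr : 0 < r) (hM : ∀ z ∈ Metric.sphere z₀ r, ‖f z‖ ≤ M) (z : ℂ) :
    ‖f z‖ ≤ M * Real.exp (Λ * (‖z - z₀‖ + r)) * ∑ k ∈ range N, (‖z - z₀‖ / r) ^ k := by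
  calc ‖f z‖ ≤ (∑ k ∈ range N, ‖newtonTable ω (jet f z₀) k 0‖ / k ! * ‖z - z₀‖ ^ k) *
        Real.exp (Λ * ‖z - z₀‖) := norm_le_sum_newtonTable_mul_exp hf hω hN z
    _ ≤ (∑ k ∈ range N, M * Real.exp (Λ * r) / r ^ k * ‖z - z₀‖ ^ k) *
        Real.exp (Λ * ‖z - z₀‖) := by
        gcongr (∑ k ∈ range N, ?_ * ‖z - z₀‖ ^ k) * _ with k
        exact norm_newtonTable_div_factorial_le hω hr (norm_jet_div_factorial_le hf hr hM) k
    _ = M * Real.exp (Λ * (‖z - z₀‖ + r)) * ∑ k ∈ range N, (‖z - z₀‖ / r) ^ k := by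
        rw [sum_mul, mul_sum]
        refine sum_congr rfl fun k _ => ?_
        rw [mul_add, Real.exp_add, div_pow]
        ring

lemma geom_sum_le_pow_of_two_le {x : ℝ} (hx : 2 ≤ x) (N : ℕ) : ∑ k ∈ range N, x ^ k ≤ x ^ N := by
  rw [geom_sum_eq (by linarith), div_le_iff₀ (by linarith)]
  nlinarith [pow_pos (zero_lt_two.trans_le hx) N]

lemma norm_le_exp_mul_pow_of_newtonTable_eq_zero_of_two_mul_le
    (hf : Differentiable ℂ f) (hω : ∀ i, ‖ω i‖ ≤ Λ) (hN : newtonTable ω (jet f z₀) N = 0)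
    (hr : 0 < r) (hM : ∀ z ∈ Metric.sphere z₀ r, ‖f z‖ ≤ M) (hz : 2 * r ≤ ‖z - z₀‖) :
    ‖f z‖ ≤ M * Real.exp (Λ * (‖z - z₀‖ + r)) * (‖z - z₀‖ / r) ^ N := by
  have hM₀ : 0 ≤ M := nonneg_of_forall_mem_sphere_norm_le hr.le hM
  refine (norm_le_exp_mul_geom_sum_of_newtonTable_eq_zero hf hω hN hr hM z).trans ?_
  gcongr
  exact geom_sum_le_pow_of_two_le ((le_div_iff₀ hr).2 hz) N

lemma norm_le_exp_mul_pow_of_newtonTable_eq_zero_of_le_two_mul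
    (hf : Differentiable ℂ f) (hω : ∀ i, ‖ω i‖ ≤ Λ) (hN : newtonTable ω (jet f z₀) N = 0)
    (hr : 0 < r) (hM : ∀ z ∈ Metric.sphere z₀ r, ‖f z‖ ≤ M) (hz₁ : r ≤ ‖z - z₀‖)
    (hz₂ : ‖z - z₀‖ ≤ 2 * r) :
    ‖f z‖ ≤ M * Real.exp (3 * Λ * r) * (‖z - z₀‖ / r) ^ N := by
  have hΛ : 0 ≤ Λ := (norm_nonneg _).trans (hω 0)
  have hM₀ : 0 ≤ M := nonneg_of_forall_mem_sphere_norm_le hr.le hM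
  have houter : ∀ w ∈ Metric.sphere z₀ (2 * r), ‖f w‖ ≤ M * (Real.exp (3 * Λ * r) * 2 ^ N) := by
    intro w hw
    have hw : ‖w - z₀‖ = 2 * r := mem_sphere_iff_norm.1 hw
    refine (norm_le_exp_mul_pow_of_newtonTable_eq_zero_of_two_mul_le hf hω hN hr hM
      hw.ge).trans_eq ?_
    rw [hw, mul_div_cancel_right₀ _ hr.ne', mul_assoc, show Λ * (2 * r + r) = 3 * Λ * r by ring]
  have hinterp := norm_le_interp_of_mem_annulus hr (by linarith) hf.diffContOnCl hM houter hz₁ hz₂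
  rw [mul_div_cancel_right₀ _ hr.ne'] at hinterp
  set x := ‖z - z₀‖ / r
  have hx : 1 ≤ x := (one_le_div hr).2 hz₁
  have hx₂ : x ≤ 2 := (div_le_iff₀ hr).2 hz₂
  set t := Real.log x / Real.log 2
  have ht : 0 ≤ t := div_nonneg (Real.log_nonneg hx) (Real.log_nonneg one_le_two)
  have ht₁ : t ≤ 1 :=
    div_le_one_of_le₀ (Real.log_le_log (by linarith) hx₂) (Real.log_nonneg one_le_two)
  have h2t : (2 : ℝ) ^ t = x := Real.rpow_logb two_pos (by norm_num) (by linarith)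
  calc ‖f z‖ ≤ M ^ (1 - t) * (M * (Real.exp (3 * Λ * r) * 2 ^ N)) ^ t := hinterp
    _ = M * Real.exp (3 * Λ * r) ^ t * x ^ N := by
        rw [Real.mul_rpow hM₀ (by positivity), Real.mul_rpow (by positivity) (by positivity),
          ← mul_assoc, ← Real.rpow_add_of_nonneg hM₀ (by linarith) ht, sub_add_cancel,
          Real.rpow_one, ← Real.rpow_natCast, ← Real.rpow_mul two_pos.le, mul_comm (N : ℝ),
          Real.rpow_mul two_pos.le, h2t, Real.rpow_natCast, ← mul_assoc]
    _ ≤ M * Real.exp (3 * Λ * r) * x ^ N := by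
        gcongr
        exact Real.rpow_le_self_of_one_le (Real.one_le_exp (by positivity)) ht₁

theorem norm_le_exp_mul_pow_of_newtonTable_eq_zero (hf : Differentiable ℂ f) (hω : ∀ i, ‖ω i‖ ≤ Λ)
    (hN : newtonTable ω (jet f z₀) N = 0) (hr : 0 < r)
    (hM : ∀ z ∈ Metric.sphere z₀ r, ‖f z‖ ≤ M) (hz : r ≤ ‖z - z₀‖) :
    ‖f z‖ ≤ M * Real.exp (3 * Λ * ‖z - z₀‖) * (‖z - z₀‖ / r) ^ N := by
  have hΛ : 0 ≤ Λ := (norm_nonneg _).trans (hω 0)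
  have hM₀ : 0 ≤ M := nonneg_of_forall_mem_sphere_norm_le hr.le hM
  rcases le_total (2 * r) ‖z - z₀‖ with hz₂ | hz₂
  · refine (norm_le_exp_mul_pow_of_newtonTable_eq_zero_of_two_mul_le hf hω hN hr hM hz₂).trans ?_
    gcongr M * Real.exp ?_ * _
    nlinarith
  · refine (norm_le_exp_mul_pow_of_newtonTable_eq_zero_of_le_two_mul hf hω hN hr hM hz hz₂).trans ?_
    gcongr

end Jet

section ExpPoly

/-- The exponential polynomial `∑ i ∈ s, p i (z) * e ^ (ν i * z)` with frequencies `ν i`; repeated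
frequencies are allowed. -/
noncomputable def expPoly {ι : Type*} (s : Finset ι) (ν : ι → ℂ) (p : ι → ℂ[X]) (z : ℂ) : ℂ :=
  ∑ i ∈ s, (p i).eval z * Complex.exp (ν i * z)

lemma hasDerivAt_eval_mul_exp (p : ℂ[X]) (ν z : ℂ) :
    HasDerivAt (fun z => p.eval z * Complex.exp (ν * z))
      ((derivative p).eval z * Complex.exp (ν * z) + ν * (p.eval z * Complex.exp (ν * z))) z := by
  refine ((p.hasDerivAt z).mul ((hasDerivAt_id z).const_mul ν).cexp).congr_deriv ?_
  simp only [id_eq]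
  ring

lemma differentiable_eval_mul_exp (p : ℂ[X]) (ν : ℂ) :
    Differentiable ℂ fun z => p.eval z * Complex.exp (ν * z) :=
  fun z => (hasDerivAt_eval_mul_exp p ν z).differentiableAt

lemma shift_jet_eval_mul_exp (p : ℂ[X]) (ν z₀ : ℂ) :
    shift ℂ (jet (fun z => p.eval z * Complex.exp (ν * z)) z₀) =
      jet (fun z => (derivative p).eval z * Complex.exp (ν * z)) z₀ +
        ν • jet (fun z => p.eval z * Complex.exp (ν * z)) z₀ := by
  rw [← jet_deriv, funext fun z => (hasDerivAt_eval_mul_exp p ν z).deriv]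
  ext j
  have hsmooth (q : ℂ[X]) : ContDiffAt ℂ j (fun z => q.eval z * Complex.exp (ν * z)) z₀ :=
    (differentiable_eval_mul_exp q ν).contDiff.contDiffAt
  simp only [jet, Pi.add_apply, Pi.smul_apply, smul_eq_mul]
  rw [iteratedDeriv_fun_add (hsmooth _) (contDiffAt_const.mul (hsmooth _)),
    iteratedDeriv_const_mul_field]

lemma aeval_shift_pow_jet_eval_mul_exp (p : ℂ[X]) (ν z₀ : ℂ) (d : ℕ) :
    aeval (shift ℂ) ((X - C ν) ^ d) (jet (fun z => p.eval z * Complex.exp (ν * z)) z₀) =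
      jet (fun z => (derivative^[d] p).eval z * Complex.exp (ν * z)) z₀ := by
  induction d generalizing p with
  | zero => simp
  | succ d ih =>
    rw [pow_succ, map_mul, Module.End.mul_apply, Function.iterate_succ_apply, ← ih]
    simp [shift_jet_eval_mul_exp]

variable {ι : Type*} {s : Finset ι} {ν : ι → ℂ} {p : ι → ℂ[X]} {d : ℕ}

lemma differentiable_expPoly : Differentiable ℂ (expPoly s ν p) :=
  Differentiable.fun_sum fun i _ => differentiable_eval_mul_exp (p i) (ν i)

lemma jet_expPoly (z₀ : ℂ) :
    jet (expPoly s ν p) z₀ = ∑ i ∈ s, jet (fun z => (p i).eval z * Complex.exp (ν i * z)) z₀ := by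
  ext j
  rw [Finset.sum_apply]
  exact iteratedDeriv_fun_sum fun i _ =>
    (differentiable_eval_mul_exp (p i) (ν i)).contDiff.contDiffAt

lemma aeval_shift_prod_jet_expPoly (hp : ∀ i ∈ s, (p i).natDegree < d) (z₀ : ℂ) :
    aeval (shift ℂ) (∏ i ∈ s, (X - C (ν i)) ^ d) (jet (expPoly s ν p) z₀) = 0 := by
  rw [jet_expPoly, map_sum]
  refine sum_eq_zero fun i hi => ?_
  obtain ⟨q, hq⟩ := dvd_prod_of_mem (fun i => (X - C (ν i)) ^ d) hi
  rw [hq, mul_comm, map_mul, Module.End.mul_apply, aeval_shift_pow_jet_eval_mul_exp,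
    iterate_derivative_eq_zero (hp i hi)]
  simp [jet_zero]

theorem norm_expPoly_le {z₀ z : ℂ} {Λ M r : ℝ} (hp : ∀ i ∈ s, (p i).natDegree < d)
    (hΛ : 0 ≤ Λ) (hν : ∀ i ∈ s, ‖ν i‖ ≤ Λ) (hr : 0 < r)
    (hM : ∀ z ∈ Metric.sphere z₀ r, ‖expPoly s ν p z‖ ≤ M) (hz : r ≤ ‖z - z₀‖) :
    ‖expPoly s ν p z‖ ≤ M * Real.exp (3 * Λ * ‖z - z₀‖) * (‖z - z₀‖ / r) ^ (d * #s) := by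
  obtain ⟨ω, hω, hnodal⟩ := exists_nodal_range_eq_multiset_prod (d • s.val.map ν) hΛ
    fun x hx => by
      obtain ⟨i, hi, rfl⟩ := Multiset.mem_map.1 (Multiset.mem_of_mem_nsmul hx)
      exact hν i hi
  have hcard : (d • s.val.map ν).card = d * #s := by simp
  have hprod : ((d • s.val.map ν).map fun x => X - C x).prod = ∏ i ∈ s, (X - C (ν i)) ^ d := by
    simp [Multiset.map_nsmul, Multiset.prod_nsmul, Finset.prod_pow]
  rw [hcard, hprod] at hnodal
  refine norm_le_exp_mul_pow_of_newtonTable_eq_zero differentiable_expPoly hω ?_ hr hM hz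
  rw [newtonTable, hnodal, aeval_shift_prod_jet_expPoly hp]

end ExpPoly

section Bivariate

variable {R : Type*} [CommSemiring R]

/-- The coefficient of `Y ^ k` in `P(X, Y)`, as a polynomial in `X`. -/
noncomputable def coeffY (P : MvPolynomial (Fin 2) R) (k : ℕ) : R[X] :=
  ∑ m ∈ P.support with m 1 = k, monomial (m 0) (P.coeff m)

lemma natDegree_coeffY_le (P : MvPolynomial (Fin 2) R) (k : ℕ) :
    (coeffY P k).natDegree ≤ P.degreeOf 0 :=
  natDegree_sum_le_of_forall_le _ _ fun _ hm =>
    (natDegree_monomial_le _).trans (MvPolynomial.monomial_le_degreeOf 0 (mem_filter.1 hm).1)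

lemma eval_eq_sum_coeffY (P : MvPolynomial (Fin 2) R) (x y : R) :
    MvPolynomial.eval ![x, y] P = ∑ k ∈ range (P.degreeOf 1 + 1), (coeffY P k).eval x * y ^ k := by
  have hdeg : ∀ m ∈ P.support, m 1 ∈ range (P.degreeOf 1 + 1) := fun m hm =>
    mem_range_succ_iff.2 (MvPolynomial.monomial_le_degreeOf 1 hm)
  rw [MvPolynomial.eval_eq', ← sum_fiberwise_of_maps_to hdeg]
  refine sum_congr rfl fun k _ => ?_
  rw [coeffY, eval_finsetSum, sum_mul]
  refine sum_congr rfl fun m hm => ?_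
  simp [Fin.prod_univ_two, (mem_filter.1 hm).2, mul_assoc]

lemma eval_exp_eq_expPoly (P : MvPolynomial (Fin 2) ℂ) (z : ℂ) :
    MvPolynomial.eval ![z, Complex.exp z] P =
      expPoly (range (P.degreeOf 1 + 1)) (fun k => (k : ℂ)) (coeffY P) z := by
  simp only [eval_eq_sum_coeffY, expPoly, Complex.exp_nat_mul]

theorem norm_eval_exp_le (P : MvPolynomial (Fin 2) ℂ) {z₀ z : ℂ} {M r : ℝ} (hr : 0 < r)
    (hM : ∀ z ∈ Metric.sphere z₀ r, ‖MvPolynomial.eval ![z, Complex.exp z] P‖ ≤ M)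
    (hz : r ≤ ‖z - z₀‖) :
    ‖MvPolynomial.eval ![z, Complex.exp z] P‖ ≤
      M * Real.exp (3 * P.degreeOf 1 * ‖z - z₀‖) *
        (‖z - z₀‖ / r) ^ ((P.degreeOf 0 + 1) * (P.degreeOf 1 + 1)) := by
  simp only [eval_exp_eq_expPoly] at hM ⊢
  have hfreq : ∀ k ∈ range (P.degreeOf 1 + 1), ‖(k : ℂ)‖ ≤ P.degreeOf 1 := fun k hk => by
    simpa using mem_range_succ_iff.1 hk
  simpa using norm_expPoly_le (fun k _ => Nat.lt_succ_of_le (natDegree_coeffY_le P k))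
    (Nat.cast_nonneg _) hfreq hr hM hz

theorem norm_eval_exp_le_pow_sq {P : MvPolynomial (Fin 2) ℂ} {n : ℕ} (hn : 1 ≤ n)
    (hP : P.totalDegree ≤ n) {z₀ z : ℂ} {M r : ℝ} (hr : 0 < r)
    (hM : ∀ z ∈ Metric.sphere z₀ r, ‖MvPolynomial.eval ![z, Complex.exp z] P‖ ≤ M)
    (hz : r ≤ ‖z - z₀‖) :
    ‖MvPolynomial.eval ![z, Complex.exp z] P‖ ≤
      M * (Real.exp (3 * ‖z - z₀‖) * (‖z - z₀‖ / r) ^ 4) ^ (n ^ 2) := by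
  have hM₀ : 0 ≤ M := nonneg_of_forall_mem_sphere_norm_le hr.le hM
  have hratio : 1 ≤ ‖z - z₀‖ / r := (one_le_div hr).2 hz
  have hdeg (i : Fin 2) : P.degreeOf i ≤ n := (P.degreeOf_le_totalDegree i).trans hP
  have hfreq : (P.degreeOf 1 : ℝ) ≤ n ^ 2 :=
    mod_cast (hdeg 1).trans (Nat.le_self_pow two_ne_zero n)
  have horder : (P.degreeOf 0 + 1) * (P.degreeOf 1 + 1) ≤ 4 * n ^ 2 :=
    calc (P.degreeOf 0 + 1) * (P.degreeOf 1 + 1) ≤ (n + n) * (n + n) := by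
          gcongr
          · exact hdeg 0
          · exact hdeg 1
      _ = 4 * n ^ 2 := by ring
  calc ‖MvPolynomial.eval ![z, Complex.exp z] P‖
      ≤ M * Real.exp (3 * P.degreeOf 1 * ‖z - z₀‖) *
          (‖z - z₀‖ / r) ^ ((P.degreeOf 0 + 1) * (P.degreeOf 1 + 1)) := norm_eval_exp_le P hr hM hz
    _ ≤ M * Real.exp (3 * n ^ 2 * ‖z - z₀‖) * (‖z - z₀‖ / r) ^ (4 * n ^ 2) := by gcongr
    _ = M * (Real.exp (3 * ‖z - z₀‖) * (‖z - z₀‖ / r) ^ 4) ^ (n ^ 2) := by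
        rw [mul_pow, ← Real.exp_nat_mul, ← pow_mul]
        push_cast
        ring_nf

end Bivariate

/-- Boundedness of the generalized Siciak extremal function (with family
`V_n = {P(z, e^z) : deg P ≤ n}` and exponent function `φ(n) = n²`) for complex disks:
for `0 < R₁ ≤ R₂` there is a constant `C = e^{c₁ R₂} (R₂/R₁)^{c₂} ≥ 1` (with `c₁, c₂`
absolute constants) such that any `P(z, e^z)` with `deg P ≤ n` bounded by `1` on the disk
of radius `R₁` about `z₀` is bounded by `C^{n²}` on the disk of radius `R₂` about `z₀`. -/
theorem siciak_extremal_bounded_disk_exp :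
    ∃ c₁ c₂ : ℝ, ∀ R₁ R₂ : ℝ, 0 < R₁ → R₁ ≤ R₂ →
      1 ≤ Real.exp (c₁ * R₂) * (R₂ / R₁) ^ c₂ ∧
      ∀ z₀ : ℂ, ∀ n : ℕ, 1 ≤ n → ∀ P : MvPolynomial (Fin 2) ℂ, P.totalDegree ≤ n →
        (∀ z ∈ Metric.closedBall z₀ R₁, ‖MvPolynomial.eval ![z, Complex.exp z] P‖ ≤ 1) →
        ∀ z ∈ Metric.closedBall z₀ R₂,
          ‖MvPolynomial.eval ![z, Complex.exp z] P‖ ≤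
            (Real.exp (c₁ * R₂) * (R₂ / R₁) ^ c₂) ^ (n ^ 2) := by
  refine ⟨3, 4, fun R₁ R₂ hR₁ hR => ?_⟩
  simp only [Real.rpow_ofNat]
  have hR₂ : 0 < R₂ := hR₁.trans_le hR
  have hC : 1 ≤ Real.exp (3 * R₂) * (R₂ / R₁) ^ 4 :=
    one_le_mul_of_one_le_of_one_le (Real.one_le_exp (by positivity))
      (one_le_pow₀ ((one_le_div hR₁).2 hR))
  refine ⟨hC, fun z₀ n hn P hP hM z hz => ?_⟩
  rcases le_total ‖z - z₀‖ R₁ with hz₁ | hz₁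
  · exact (hM z (mem_closedBall_iff_norm.2 hz₁)).trans (one_le_pow₀ hC)
  have hz₂ : ‖z - z₀‖ ≤ R₂ := mem_closedBall_iff_norm.1 hz
  have hM₁ : ∀ w ∈ Metric.sphere z₀ R₁, ‖MvPolynomial.eval ![w, Complex.exp w] P‖ ≤ 1 :=
    fun w hw => hM w (Metric.sphere_subset_closedBall hw)
  calc ‖MvPolynomial.eval ![z, Complex.exp z] P‖
      ≤ 1 * (Real.exp (3 * ‖z - z₀‖) * (‖z - z₀‖ / R₁) ^ 4) ^ (n ^ 2) :=
        norm_eval_exp_le_pow_sq hn hP hR₁ hM₁ hz₁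
    _ = (Real.exp (3 * ‖z - z₀‖) * (‖z - z₀‖ / R₁) ^ 4) ^ (n ^ 2) := one_mul _
    _ ≤ (Real.exp (3 * R₂) * (R₂ / R₁) ^ 4) ^ (n ^ 2) := by gcongr
end

section
/- There is an absolute constant A ≤ 4 with the following property: for every polynomial t ∈ ℂ[z] of degree d ≥ 1, every z₀ ∈ ℂ, all radii R ≥ R₀ > 0, every integer n ≥ 1, every bivariate polynomial P ∈ ℂ[z,w] of total degree at most n, and every c ∈ ℂ, the number of points z with |z−z₀| ≤ R and P(z, e^{t(z)}) = c is at most A·( d n² + d n (R/R₀)^d · max_{|z−z₀|≤R₀} |t(z)| ). In particular, for fixed t, R, R₀, z₀ there is a constant C such that the valency in the disk {|z−z₀| ≤ R} of every function of the form P(z, e^{t(z)}) with deg P ≤ n is at most C n². -/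
/-!
Let `d` be the degree of `t` and let `Q u` be the product of `P (z, exp (t z))` over the fibre
`t z = u`. Up to a constant, `Q u` is the resultant in `z` of `t z - u` and `P (z, exp u)`. Give `u`
weight `d` and `exp u` weight `1`: the Sylvester matrix shows that `Q` is an exponential polynomial
of weight at most `d * n`. Therefore `exp (-d * n * u / 2) * Q u` satisfies a linear differential
equation with constant coefficients, of order at most `2 * d * n ^ 2 + 1` and with all
characteristic roots of modulus at most `d * n / 2`, which bounds its growth from the disc
`‖u‖ ≤ ρ` to the disc `‖u‖ ≤ 5 * ρ`. Blaschke factors turn bounded growth into a bound for the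
number of its zeros in the small disc, and every zero `z` of `P (z, exp (t z))` with `‖t z‖ ≤ ρ`
contributes the zero `t z`. Finally, the Bernstein-Walsh inequality for discs provides the `ρ` that
bounds `t` on the disc of radius `R`.
-/

section

open Polynomial Metric
open scoped Topology Filter ComplexConjugate

/-! ### Growth of solutions of linear differential equations -/

/-- The space of entire functions, on which differentiation is a linear endomorphism. -/
def entireFunctions : Submodule ℂ (ℂ → ℂ) where
  carrier := {f | Differentiable ℂ f}
  add_mem' := Differentiable.add
  zero_mem' := differentiable_const 0
  smul_mem' c _ hf := hf.const_smul c

/-- Differentiation `D = d/dz` on entire functions; `aeval entireDeriv p` is the differential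
operator `p(D)` with constant coefficients. -/
noncomputable def entireDeriv : Module.End ℂ entireFunctions where
  toFun F := ⟨deriv F.1, (F.2.contDiff (n := 2)).differentiable_deriv_two⟩
  map_add' F G := Subtype.ext <| funext fun z => deriv_add (F.2 z) (G.2 z)
  map_smul' c F := Subtype.ext <| funext fun z => deriv_const_smul c (F.2 z)

lemma entireDeriv_pow_coe (F : entireFunctions) (j : ℕ) :
    ((entireDeriv ^ j) F).1 = iteratedDeriv j F.1 := by
  induction j with
  | zero => simp only [pow_zero, Module.End.one_apply, iteratedDeriv_zero]
  | succ j ih =>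
    rw [pow_succ', iteratedDeriv_succ, ← ih]
    rfl

lemma aeval_entireDeriv_apply (p : ℂ[X]) (F : entireFunctions) (z : ℂ) :
    (aeval entireDeriv p F).1 z =
      ∑ j ∈ Finset.range (p.natDegree + 1), p.coeff j * iteratedDeriv j F.1 z := by
  rw [aeval_eq_sum_range, LinearMap.sum_apply, Submodule.coe_sum, Finset.sum_apply]
  refine Finset.sum_congr rfl fun j _ => ?_
  rw [LinearMap.smul_apply, Submodule.coe_smul, Pi.smul_apply, smul_eq_mul, entireDeriv_pow_coe]

lemma aeval_entireDeriv_X_sub_C_apply (w : ℂ) (F : entireFunctions) (z : ℂ) :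
    (aeval entireDeriv (X - C w) F).1 z = deriv F.1 z - w * F.1 z := by
  rw [map_sub, aeval_X, aeval_C]
  rfl

lemma hasDerivAt_mul_add_aeval_entireDeriv_X_sub_C (F : entireFunctions) (w z : ℂ) :
    HasDerivAt F.1 (w * F.1 z + (aeval entireDeriv (X - C w) F).1 z) z := by
  rw [aeval_entireDeriv_X_sub_C_apply, add_sub_cancel]
  exact (F.2 z).hasDerivAt

lemma norm_exp_mul_mul_one_sub_le {w : ℂ} {Δ : ℝ} (hw : ‖w‖ ≤ Δ) (v : ℂ) {x : ℝ} (hx : x ≤ 1) :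
    ‖Complex.exp (w * v * (1 - x))‖ ≤ Real.exp (Δ * (‖v‖ * (1 - x))) := by
  rw [Complex.norm_exp, Real.exp_le_exp]
  refine (Complex.re_le_norm _).trans ?_
  have h1x : ‖(1 - x : ℂ)‖ = 1 - x := by
    rw [← Complex.ofReal_one, ← Complex.ofReal_sub, Complex.norm_real,
      Real.norm_of_nonneg (sub_nonneg.2 hx)]
  rw [norm_mul, norm_mul, h1x, mul_assoc]
  gcongr

/-- Integrate `x ↦ exp (w v (1 - x)) f (v x)` over `[0, 1]`; the factor `f` drops out of its
derivative. -/
lemma norm_le_exp_mul_of_hasDerivAt {f g : ℂ → ℂ} {w : ℂ} {Δ : ℝ} {B B' : ℝ → ℝ} (hw : ‖w‖ ≤ Δ)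
    (hf : ∀ z, HasDerivAt f (w * f z + g z) z) (hB : ∀ x, HasDerivAt B (B' x) x)
    (hg : ∀ z, ‖g z‖ ≤ Real.exp (Δ * ‖z‖) * B' ‖z‖) (h0 : ‖f 0‖ ≤ B 0) (v : ℂ) :
    ‖f v‖ ≤ Real.exp (Δ * ‖v‖) * B ‖v‖ := by
  let K : ℝ → ℂ := fun x => Complex.exp (w * v * (1 - x)) * f (v * x)
  have hK (x : ℝ) : HasDerivAt K (v * (Complex.exp (w * v * (1 - x)) * g (v * x))) x := by
    have hx : HasDerivAt (fun x : ℝ => (x : ℂ)) 1 x := Complex.ofRealCLM.hasDerivAt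
    have hexp : HasDerivAt (fun x : ℝ => Complex.exp (w * v * (1 - (x : ℂ))))
        (Complex.exp (w * v * (1 - (x : ℂ))) * (w * v * -1)) x :=
      ((hx.const_sub 1).const_mul (w * v)).cexp
    have hfv : HasDerivAt (fun x : ℝ => f (v * x))
        ((w * f (v * x) + g (v * x)) * (v * 1)) x :=
      (hf (v * x)).comp x (hx.const_mul v)
    exact (hexp.mul hfv).congr_deriv (by ring)
  have hKB (x : ℝ) : HasDerivAt (fun x => Real.exp (Δ * ‖v‖) * B (‖v‖ * x))
      (Real.exp (Δ * ‖v‖) * (B' (‖v‖ * x) * ‖v‖)) x := by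
    have hx : HasDerivAt (fun x : ℝ => ‖v‖ * x) ‖v‖ x := hasDerivAt_const_mul ‖v‖
    exact ((hB (‖v‖ * x)).comp x hx).const_mul _
  have hexp (x : ℝ) (hx : x ≤ 1) := norm_exp_mul_mul_one_sub_le hw v hx
  have hK0 : ‖K 0‖ ≤ Real.exp (Δ * ‖v‖) * B (‖v‖ * 0) := by
    have := mul_le_mul (hexp 0 zero_le_one) h0 (norm_nonneg _) (Real.exp_nonneg _)
    simpa only [K, norm_mul, Complex.ofReal_zero, mul_zero, sub_zero, mul_one] using this
  have hderiv (x : ℝ) (hx : x ∈ Set.Ico (0 : ℝ) 1) :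
      ‖v * (Complex.exp (w * v * (1 - x)) * g (v * x))‖ ≤
        Real.exp (Δ * ‖v‖) * (B' (‖v‖ * x) * ‖v‖) := by
    have hgx := hg (v * x)
    rw [norm_mul, Complex.norm_real, Real.norm_of_nonneg hx.1] at hgx
    calc ‖v * (Complex.exp (w * v * (1 - x)) * g (v * x))‖
        = ‖v‖ * (‖Complex.exp (w * v * (1 - x))‖ * ‖g (v * x)‖) := by rw [norm_mul, norm_mul]
      _ ≤ ‖v‖ * (Real.exp (Δ * (‖v‖ * (1 - x))) *
            (Real.exp (Δ * (‖v‖ * x)) * B' (‖v‖ * x))) := by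
          have := hexp x hx.2.le
          gcongr
      _ = Real.exp (Δ * ‖v‖) * (B' (‖v‖ * x) * ‖v‖) := by
          rw [show Δ * ‖v‖ = Δ * (‖v‖ * (1 - x)) + Δ * (‖v‖ * x) by ring, Real.exp_add]
          ring
  have := image_norm_le_of_norm_deriv_right_le_deriv_boundary'
    (fun x _ => (hK x).continuousAt.continuousWithinAt) (fun x _ => (hK x).hasDerivWithinAt) hK0
    (fun x _ => (hKB x).continuousAt.continuousWithinAt) (fun x _ => (hKB x).hasDerivWithinAt)
    hderiv (Set.right_mem_Icc.2 zero_le_one)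
  simpa only [K, Complex.ofReal_one, sub_self, mul_zero, Complex.exp_zero, one_mul, mul_one]
    using this

lemma hasDerivAt_sum_range_succ_mul_pow_div_factorial (b : ℕ → ℝ) (n : ℕ) (x : ℝ) :
    HasDerivAt (fun x => ∑ i ∈ Finset.range (n + 1), b i * x ^ i / i.factorial)
      (∑ i ∈ Finset.range n, b (i + 1) * x ^ i / i.factorial) x := by
  simp only [Finset.sum_range_succ' _ n, pow_zero]
  refine (HasDerivAt.fun_sum fun (i : ℕ) _ => ?_).add_const (b 0 * 1 / (0 : ℕ).factorial)
  refine (((hasDerivAt_pow (i + 1) x).const_mul (b (i + 1))).div_const _).congr_deriv ?_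
  have : (i.factorial : ℝ) ≠ 0 := by positivity
  rw [Nat.factorial_succ, Nat.add_sub_cancel]
  push_cast
  field_simp

lemma norm_le_exp_mul_sum_of_prod_aeval_entireDeriv_eq_zero {Δ : ℝ} (s : Multiset ℂ)
    (hs : ∀ w ∈ s, ‖w‖ ≤ Δ) (F : entireFunctions) (b : ℕ → ℝ)
    (hF : aeval entireDeriv (s.map fun w => X - C w).prod F = 0)
    (hb : ∀ r ≤ s, ‖(aeval entireDeriv (r.map fun w => X - C w).prod F).1 0‖ ≤ b r.card) (v : ℂ) :
    ‖F.1 v‖ ≤ Real.exp (Δ * ‖v‖) * ∑ i ∈ Finset.range s.card, b i * ‖v‖ ^ i / i.factorial := by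
  induction s using Multiset.induction_on generalizing F b v with
  | empty =>
    have hF0 : F = 0 := by simpa using hF
    simp [hF0]
  | cons w s ih =>
    set G := aeval entireDeriv (X - C w) F
    have hcons (r : Multiset ℂ) : aeval entireDeriv (r.map fun w => X - C w).prod G =
        aeval entireDeriv ((w ::ₘ r).map fun w => X - C w).prod F := by
      rw [Multiset.map_cons, Multiset.prod_cons, mul_comm, map_mul, Module.End.mul_apply]
    have hG (z : ℂ) := ih (fun u hu => hs u (Multiset.mem_cons_of_mem hu)) G (fun i => b (i + 1))
      ((hcons s).trans hF)
      (fun r hr => by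
        rw [hcons, ← Multiset.card_cons w]
        exact hb _ (Multiset.cons_le_cons w hr)) z
    rw [Multiset.card_cons]
    refine norm_le_exp_mul_of_hasDerivAt (hs w (Multiset.mem_cons_self w s))
      (hasDerivAt_mul_add_aeval_entireDeriv_X_sub_C F w)
      (hasDerivAt_sum_range_succ_mul_pow_div_factorial b s.card) hG ?_ v
    simpa [Finset.sum_range_succ'] using hb 0 (Multiset.zero_le _)

/-- Each coefficient of `p` is at most the corresponding one of `(X + Δ) ^ k`; combine with Cauchy's
estimates for the derivatives at `0`. -/
lemma norm_aeval_entireDeriv_apply_zero_le {p : ℂ[X]} (hp : p.Monic) {Δ ρ M : ℝ} (hΔ : 0 ≤ Δ)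
    (hroots : ∀ w ∈ p.roots, ‖w‖ ≤ Δ) (hρ : 0 < ρ) {F : entireFunctions}
    (hM : ∀ z ∈ closedBall (0 : ℂ) ρ, ‖F.1 z‖ ≤ M) :
    ‖(aeval entireDeriv p F).1 0‖ ≤
      M * Real.exp (Δ * ρ) * (p.natDegree.factorial / ρ ^ p.natDegree) := by
  set k := p.natDegree
  have hM0 : 0 ≤ M := (norm_nonneg _).trans (hM 0 (mem_closedBall_self hρ.le))
  have hcoeff (j : ℕ) : ‖p.coeff j‖ ≤ Δ ^ (k - j) * k.choose j := by
    simpa only [map_id] using coeff_le_of_roots_le (f := RingHom.id ℂ) j hp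
      (IsAlgClosed.splits _) (by simpa only [map_id] using hroots)
  have hderiv (j : ℕ) : ‖iteratedDeriv j F.1 0‖ ≤ j.factorial * M / ρ ^ j :=
    Complex.norm_iteratedDeriv_le_of_forall_mem_sphere_norm_le j hρ F.2.diffContOnCl
      fun z hz => hM z (sphere_subset_closedBall hz)
  rw [aeval_entireDeriv_apply]
  calc ‖∑ j ∈ Finset.range (k + 1), p.coeff j * iteratedDeriv j F.1 0‖
      ≤ ∑ j ∈ Finset.range (k + 1), Δ ^ (k - j) * k.choose j * (j.factorial * M / ρ ^ j) := by
        refine norm_sum_le_of_le _ fun j _ => ?_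
        rw [norm_mul]
        exact mul_le_mul (hcoeff j) (hderiv j) (norm_nonneg _) (by positivity)
    _ = ∑ j ∈ Finset.range (k + 1),
          M * (k.factorial / ρ ^ k) * ((Δ * ρ) ^ (k - j) / (k - j).factorial) := by
        refine Finset.sum_congr rfl fun j hj => ?_
        obtain ⟨m, hm⟩ := Nat.exists_eq_add_of_le (Finset.mem_range_succ_iff.1 hj)
        have hm' : k - j = m := by omega
        have hfac : (k.factorial : ℝ) = k.choose j * j.factorial * m.factorial := by
          rw [← hm']
          exact_mod_cast (Nat.choose_mul_factorial_mul_factorial (by omega : j ≤ k)).symm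
        rw [hm', hfac, show ρ ^ k = ρ ^ j * ρ ^ m by rw [hm, pow_add], mul_pow]
        field_simp
    _ = M * (k.factorial / ρ ^ k) *
          ∑ i ∈ Finset.range (k + 1), (Δ * ρ) ^ i / i.factorial := by
        rw [← Finset.mul_sum]
        congr 1
        simpa using Finset.sum_range_reflect (fun i => (Δ * ρ) ^ i / (i.factorial : ℝ)) (k + 1)
    _ ≤ M * (k.factorial / ρ ^ k) * Real.exp (Δ * ρ) := by
        gcongr
        exact Real.sum_le_exp_of_nonneg (by positivity) _
    _ = M * Real.exp (Δ * ρ) * (k.factorial / ρ ^ k) := by ring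

theorem norm_le_of_aeval_entireDeriv_eq_zero {p : ℂ[X]} (hp : p.Monic) {Δ ρ M : ℝ} (hΔ : 0 ≤ Δ)
    (hroots : ∀ w ∈ p.roots, ‖w‖ ≤ Δ) (hρ : 0 < ρ) {F : entireFunctions}
    (hF : aeval entireDeriv p F = 0) (hM : ∀ z ∈ closedBall (0 : ℂ) ρ, ‖F.1 z‖ ≤ M) (v : ℂ) :
    ‖F.1 v‖ ≤ M * Real.exp (Δ * (ρ + ‖v‖)) * ∑ i ∈ Finset.range p.natDegree, (‖v‖ / ρ) ^ i := by
  have hsplits : p.Splits := IsAlgClosed.splits p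
  have hprod : (p.roots.map fun w => X - C w).prod = p :=
    (hsplits.eq_prod_roots_of_monic hp).symm
  have hsub (r : Multiset ℂ) (hr : r ≤ p.roots) :
      ‖(aeval entireDeriv (r.map fun w => X - C w).prod F).1 0‖ ≤
        M * Real.exp (Δ * ρ) * (r.card.factorial / ρ ^ r.card) := by
    have := norm_aeval_entireDeriv_apply_zero_le
      (monic_multisetProd_X_sub_C r) hΔ
      (fun w hw => hroots w (Multiset.mem_of_le hr (by rwa [roots_multiset_prod_X_sub_C] at hw)))
      hρ hM
    rwa [natDegree_multiset_prod_X_sub_C_eq_card] at this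
  have := norm_le_exp_mul_sum_of_prod_aeval_entireDeriv_eq_zero p.roots hroots F
    (fun i => M * Real.exp (Δ * ρ) * (i.factorial / ρ ^ i)) (by rwa [hprod]) hsub v
  rw [hsplits.natDegree_eq_card_roots]
  refine this.trans_eq ?_
  rw [mul_add, Real.exp_add, Finset.mul_sum, Finset.mul_sum]
  refine Finset.sum_congr rfl fun i _ => ?_
  rw [div_pow]
  field_simp

/-! ### Resultants and graded filtrations -/

section Resultant

variable {A σ : Type*} [CommRing A] [SetLike σ A] [AddSubgroupClass σ A]

/-- The weight of an entry is a column weight minus the row index, so all terms of the Leibniz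
formula for the determinant have the same weight. -/
lemma sylvester_mem_of_coeff_mem (V : ℤ → σ) {f g : A[X]} {m n : ℕ} {p q : ℤ}
    (hf : ∀ k ≤ m, f.coeff k ∈ V (p - k)) (hg : ∀ k ≤ n, g.coeff k ∈ V (q - k))
    (i j : Fin (m + n)) :
    sylvester f g m n i j ∈
      V (Fin.addCases (fun j₁ : Fin m => q + j₁) (fun j₂ : Fin n => p + j₂) j - i) := by
  induction j using Fin.addCases with
  | left j =>
    rw [sylvester, Matrix.of_apply, Fin.addCases_left, Fin.addCases_left]
    split_ifs with h
    · rw [show q + (j : ℤ) - (i : ℤ) = q - ((i - j : ℕ) : ℤ) by rw [Nat.cast_sub h.1]; ring]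
      exact hg _ (Nat.sub_le_iff_le_add'.2 h.2)
    · exact zero_mem _
  | right j =>
    rw [sylvester, Matrix.of_apply, Fin.addCases_right, Fin.addCases_right]
    split_ifs with h
    · rw [show p + (j : ℤ) - (i : ℤ) = p - ((i - j : ℕ) : ℤ) by rw [Nat.cast_sub h.1]; ring]
      exact hf _ (Nat.sub_le_iff_le_add'.2 h.2)
    · exact zero_mem _

theorem resultant_mem_of_coeff_mem (V : ℤ → σ) [SetLike.GradedMonoid V] {f g : A[X]} {m n : ℕ}
    {p q : ℤ} (hf : ∀ k ≤ m, f.coeff k ∈ V (p - k)) (hg : ∀ k ≤ n, g.coeff k ∈ V (q - k)) :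
    resultant f g m n ∈ V (n * p + m * q - m * n) := by
  rw [resultant, Matrix.det_apply]
  refine sum_mem fun τ _ => ?_
  rw [Units.smul_def]
  refine zsmul_mem ?_ _
  have hprod := SetLike.prod_mem_graded V _ (fun j => sylvester f g m n (τ j) j)
    (F := Finset.univ) fun j _ => sylvester_mem_of_coeff_mem V hf hg (τ j) j
  convert hprod using 2
  rw [Finset.sum_sub_distrib, Equiv.sum_comp τ fun j => ((j : ℕ) : ℤ), Fin.sum_univ_add,
    Fin.sum_univ_add]
  simp only [Fin.addCases_left, Fin.addCases_right, Fin.val_castAdd, Fin.val_natAdd, Nat.cast_add,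
    Finset.sum_add_distrib, Finset.sum_const, Finset.card_univ, Fintype.card_fin, nsmul_eq_mul]
  ring

end Resultant

/-! ### Exponential polynomials -/

/-- The exponential monomial `u ↦ u ^ a * exp (β * u)`. -/
noncomputable def expMonomial (a : ℕ) (β : ℂ) : entireFunctions :=
  ⟨fun u => u ^ a * Complex.exp (β * u),
    (differentiable_pow a).mul (differentiable_id.const_mul β).cexp⟩

lemma expMonomial_mul (a a' : ℕ) (β β' : ℂ) :
    (expMonomial a β).1 * (expMonomial a' β').1 = (expMonomial (a + a') (β + β')).1 := by
  funext u
  simp only [expMonomial, Pi.mul_apply, add_mul, Complex.exp_add, pow_add]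
  ring

lemma aeval_entireDeriv_X_sub_C_expMonomial (a : ℕ) (β : ℂ) :
    aeval entireDeriv (X - C β) (expMonomial a β) = (a : ℂ) • expMonomial (a - 1) β := by
  refine Subtype.ext <| funext fun u => ?_
  have hderiv : HasDerivAt (expMonomial a β).1 (a * u ^ (a - 1) * Complex.exp (β * u) +
      u ^ a * (Complex.exp (β * u) * (β * 1))) u :=
    (hasDerivAt_pow a u).mul ((hasDerivAt_id u).const_mul β).cexp
  rw [aeval_entireDeriv_X_sub_C_apply, hderiv.deriv, Submodule.coe_smul, Pi.smul_apply,
    smul_eq_mul]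
  simp only [expMonomial]
  ring

lemma aeval_entireDeriv_X_sub_C_pow_succ_expMonomial (a : ℕ) (β : ℂ) :
    aeval entireDeriv ((X - C β) ^ (a + 1)) (expMonomial a β) = 0 := by
  induction a with
  | zero => rw [pow_one, aeval_entireDeriv_X_sub_C_expMonomial, Nat.cast_zero, zero_smul]
  | succ a ih =>
    rw [pow_succ, map_mul, Module.End.mul_apply, aeval_entireDeriv_X_sub_C_expMonomial,
      Nat.add_sub_cancel, map_smul, ih, smul_zero]

/-- The exponential polynomials of weight at most `k`, where `u` has weight `d` and `exp u` has
weight `1`. The weight takes values in `ℤ` so that coefficients of too high degree land in the zero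
space. -/
noncomputable def expPolyFiltration (d : ℕ) (k : ℤ) : Submodule ℂ (ℂ → ℂ) :=
  Submodule.span ℂ {φ | ∃ a b : ℕ, (d * a + b : ℤ) ≤ k ∧ (expMonomial a b).1 = φ}

lemma expMonomial_mem_expPolyFiltration {d : ℕ} {k : ℤ} {a b : ℕ} (h : (d * a + b : ℤ) ≤ k) :
    (expMonomial a b).1 ∈ expPolyFiltration d k :=
  Submodule.subset_span ⟨a, b, h, rfl⟩

lemma algebraMap_mem_expPolyFiltration {d : ℕ} {k : ℤ} (hk : 0 ≤ k) (c : ℂ) :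
    algebraMap ℂ (ℂ → ℂ) c ∈ expPolyFiltration d k := by
  have h1 : (expMonomial 0 (0 : ℕ)).1 = 1 := by
    funext u
    simp [expMonomial]
  rw [Algebra.algebraMap_eq_smul_one, ← h1]
  exact Submodule.smul_mem _ c (expMonomial_mem_expPolyFiltration (by simpa using hk))

instance expPolyFiltration_gradedMonoid (d : ℕ) : SetLike.GradedMonoid (expPolyFiltration d) where
  one_mem := by simpa only [map_one] using algebraMap_mem_expPolyFiltration (d := d) le_rfl 1
  mul_mem k l f g hf hg := by
    have h := Submodule.mul_mem_mul hf hg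
    rw [expPolyFiltration, expPolyFiltration, Submodule.span_mul_span] at h
    refine Submodule.span_mono ?_ h
    rintro _ ⟨_, ⟨a, b, hab, rfl⟩, _, ⟨a', b', hab', rfl⟩, rfl⟩
    refine ⟨a + a', b + b', ?_, ?_⟩
    · push_cast
      linarith
    · rw [Nat.cast_add]
      exact (expMonomial_mul a a' b b').symm

/-- The characteristic polynomial of a constant coefficient differential equation satisfied by
`exp (-k * u / 2) * Q u` for all `Q` in `expPolyFiltration d k`; the shift by `k / 2` centres
the frequencies `0, …, k` at the origin. -/
noncomputable def expPolyAnnihilator (d k : ℕ) : ℂ[X] :=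
  ∏ b ∈ Finset.range (k + 1), (X - C (b - k / 2 : ℂ)) ^ ((k - b) / d + 1)

lemma monic_expPolyAnnihilator (d k : ℕ) : (expPolyAnnihilator d k).Monic :=
  monic_prod_of_monic _ _ fun _ _ => (monic_X_sub_C _).pow _

lemma norm_le_of_mem_roots_expPolyAnnihilator {d k : ℕ} {w : ℂ}
    (hw : w ∈ (expPolyAnnihilator d k).roots) : ‖w‖ ≤ k / 2 := by
  have hw0 := isRoot_of_mem_roots hw
  rw [IsRoot, expPolyAnnihilator, eval_prod, Finset.prod_eq_zero_iff] at hw0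
  obtain ⟨b, hb, hwb⟩ := hw0
  rw [eval_pow, eval_sub, eval_X, eval_C] at hwb
  have hw' : w = ((b - k / 2 : ℝ) : ℂ) := by
    rw [sub_eq_zero.1 (eq_zero_of_pow_eq_zero hwb)]
    push_cast
    rfl
  have hbk : (b : ℝ) ≤ k := by exact_mod_cast Finset.mem_range_succ_iff.1 hb
  rw [hw', Complex.norm_real, Real.norm_eq_abs, abs_le]
  constructor <;> linarith [b.cast_nonneg (α := ℝ)]

lemma natDegree_expPolyAnnihilator_mul_le {d n : ℕ} (hd : 1 ≤ d) (hn : 1 ≤ n) :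
    (expPolyAnnihilator d (d * n)).natDegree ≤ 2 * (d * n ^ 2) + 1 := by
  have hdeg : (expPolyAnnihilator d (d * n)).natDegree =
      ∑ b ∈ Finset.range (d * n + 1), ((d * n - b) / d + 1) := by
    rw [expPolyAnnihilator, natDegree_prod_of_monic _ _ fun _ _ => (monic_X_sub_C _).pow _]
    exact Finset.sum_congr rfl fun b _ => by rw [natDegree_pow, natDegree_X_sub_C, mul_one]
  have hterm (b : ℕ) (hb : b ∈ Finset.range (d * n)) : (d * n - (b + 1)) / d + 1 ≤ n := by
    have := Finset.mem_range.1 hb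
    rw [Nat.succ_le_iff, Nat.div_lt_iff_lt_mul hd, mul_comm n d]
    omega
  calc (expPolyAnnihilator d (d * n)).natDegree
      = ∑ b ∈ Finset.range (d * n), ((d * n - (b + 1)) / d + 1) + (n + 1) := by
        rw [hdeg, Finset.sum_range_succ', Nat.sub_zero, Nat.mul_div_cancel_left _ hd]
    _ ≤ d * n * n + (n + 1) := by
        simpa using Finset.sum_le_card_nsmul _ _ n hterm
    _ ≤ 2 * (d * n ^ 2) + 1 := by nlinarith [Nat.mul_le_mul hd hn]

lemma pow_dvd_expPolyAnnihilator {d k a b : ℕ} (hd : 1 ≤ d) (hab : d * a + b ≤ k) :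
    (X - C (b - k / 2 : ℂ)) ^ (a + 1) ∣ expPolyAnnihilator d k := by
  have ha : a ≤ (k - b) / d := by
    rw [Nat.le_div_iff_mul_le hd, mul_comm]
    omega
  exact (pow_dvd_pow _ (Nat.succ_le_succ ha)).trans <|
    Finset.dvd_prod_of_mem (fun b : ℕ => (X - C (b - k / 2 : ℂ)) ^ ((k - b) / d + 1))
      (Finset.mem_range_succ_iff.2 (by omega))

theorem exists_aeval_expPolyAnnihilator_eq_zero {d k : ℕ} (hd : 1 ≤ d) {Q : ℂ → ℂ}
    (hQ : Q ∈ expPolyFiltration d k) :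
    ∃ F : entireFunctions, aeval entireDeriv (expPolyAnnihilator d k) F = 0 ∧
      ∀ u, F.1 u = Complex.exp (-(k / 2) * u) * Q u := by
  let N := LinearMap.ker (aeval entireDeriv (expPolyAnnihilator d k))
  let S : Submodule ℂ (ℂ → ℂ) := (N.map entireFunctions.subtype).comap
    (LinearMap.mulLeft ℂ fun u : ℂ => Complex.exp (-(k / 2) * u))
  suffices expPolyFiltration d k ≤ S by
    obtain ⟨F, hF, hFQ⟩ := this hQ
    exact ⟨F, hF, congrFun hFQ⟩
  refine Submodule.span_le.2 ?_
  rintro _ ⟨a, b, hab, rfl⟩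
  refine ⟨expMonomial a (b - k / 2), ?_, ?_⟩
  · obtain ⟨q, hq⟩ := pow_dvd_expPolyAnnihilator (k := k) hd (by exact_mod_cast hab)
    rw [SetLike.mem_coe, LinearMap.mem_ker, hq, mul_comm, map_mul, Module.End.mul_apply,
      aeval_entireDeriv_X_sub_C_pow_succ_expMonomial, map_zero]
  · funext u
    have : (b - k / 2 : ℂ) * u = -(k / 2) * u + b * u := by ring
    simp only [expMonomial, Submodule.subtype_apply, LinearMap.mulLeft_apply, Pi.mul_apply, this,
      Complex.exp_add]
    ring

/-! ### Products over the fibres of a polynomial -/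

section FiberProd

variable {K M : Type*} [Field K]

/-- The product of `f` over the fibre of `t` above `u`, with multiplicities: the norm of `f` along
`t`. -/
noncomputable def fiberProd [CommMonoid M] (t : K[X]) (f : K → M) (u : K) : M :=
  ((t - C u).roots.map f).prod

lemma leadingCoeff_sub_C_of_degree_pos {t : K[X]} (ht : 0 < t.degree) (u : K) :
    (t - C u).leadingCoeff = t.leadingCoeff :=
  leadingCoeff_sub_of_degree_lt (degree_C_le.trans_lt ht)

lemma fiberProd_congr [CommMonoid M] {t : K[X]} (ht : 0 < t.degree) {f g : K → M} {u : K}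
    (h : ∀ z, t.eval z = u → f z = g z) : fiberProd t f u = fiberProd t g u :=
  congrArg Multiset.prod <| Multiset.map_congr rfl fun z hz => h z ((mem_roots_sub_C ht).1 hz)

lemma fiberProd_eq_zero_iff [CommMonoidWithZero M] [NoZeroDivisors M] [Nontrivial M] {t : K[X]}
    (ht : 0 < t.degree) {f : K → M} {u : K} :
    fiberProd t f u = 0 ↔ ∃ z, t.eval z = u ∧ f z = 0 := by
  simp only [fiberProd, Multiset.prod_eq_zero_iff, Multiset.mem_map, mem_roots_sub_C ht]

lemma fiberProd_mul [CommMonoid M] (t : K[X]) (f g : K → M) (u : K) :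
    fiberProd t (fun z => f z * g z) u = fiberProd t f u * fiberProd t g u :=
  Multiset.prod_map_mul

lemma fiberProd_finset_prod [CommMonoid M] {ι : Type*} (t : K[X]) (s : Finset ι) (f : ι → K → M)
    (u : K) :
    fiberProd t (fun z => ∏ i ∈ s, f i z) u = ∏ i ∈ s, fiberProd t (f i) u :=
  Multiset.prod_map_prod_map _ s.val

lemma norm_fiberProd [NormedField M] (t : K[X]) (f : K → M) (u : K) :
    ‖fiberProd t f u‖ = fiberProd t (fun z => ‖f z‖) u :=
  (map_multiset_prod (normHom (α := M)) _).trans <|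
    congrArg Multiset.prod (Multiset.map_map normHom f _)

variable [IsAlgClosed K]

lemma leadingCoeff_mul_fiberProd_const_sub {t : K[X]} (ht : 0 < t.degree) (a u : K) :
    t.leadingCoeff * fiberProd t (fun z => a - z) u = t.eval a - u := by
  have h := (IsAlgClosed.splits (t - C u)).eval_eq_prod_roots a
  rw [leadingCoeff_sub_C_of_degree_pos ht, eval_sub, eval_C] at h
  exact h.symm

theorem leadingCoeff_pow_mul_fiberProd_eval {t g : K[X]} (ht : 0 < t.degree) {n : ℕ}
    (hg : g.natDegree ≤ n) (u : K) :
    t.leadingCoeff ^ n * fiberProd t (fun z => g.eval z) u =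
      resultant (t - C u) g t.natDegree n := by
  have h := resultant_eq_prod_eval (t - C u) g n hg (IsAlgClosed.splits _)
  rw [natDegree_sub_C, leadingCoeff_sub_C_of_degree_pos ht] at h
  exact h.symm

end FiberProd

lemma isBounded_preimage_eval {𝕜 : Type*} [NormedField 𝕜] {t : 𝕜[X]} (ht : 0 < t.degree)
    {s : Set 𝕜} (hs : Bornology.IsBounded s) :
    Bornology.IsBounded ((fun z => t.eval z) ⁻¹' s) := by
  have hcobounded : Filter.Tendsto (fun z => t.eval z) (Bornology.cobounded 𝕜)
      (Bornology.cobounded 𝕜) :=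
    tendsto_norm_atTop_iff_cobounded.1 (t.tendsto_norm_atTop ht tendsto_norm_cobounded_atTop)
  rw [← Bornology.isCobounded_compl_iff, Bornology.isCobounded_def] at hs ⊢
  exact hcobounded hs

lemma isBigO_one_principal_of_isBounded {α E 𝕜 : Type*} [PseudoMetricSpace α] [ProperSpace α]
    [SeminormedAddCommGroup E] [NormedField 𝕜] {f : α → E} (hf : Continuous f) {s : Set α}
    (hs : Bornology.IsBounded s) : f =O[𝓟 s] fun _ => (1 : 𝕜) :=
  (hf.continuousOn.isBigO_principal hs.isCompact_closure
    (norm_ne_zero_iff.2 one_ne_zero)).mono (Filter.principal_mono.2 subset_closure)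

lemma fiberProd_isBigO_one {t : ℂ[X]} (ht : 0 < t.degree) {g : ℂ → ℂ} (hg : Continuous g)
    {s : Set ℂ} (hs : Bornology.IsBounded s) : fiberProd t g =O[𝓟 s] fun _ => (1 : ℂ) := by
  obtain ⟨B, hB⟩ := Asymptotics.isBigO_principal.1
    (isBigO_one_principal_of_isBounded (𝕜 := ℂ) hg (isBounded_preimage_eval ht hs))
  refine Asymptotics.isBigO_principal.2 ⟨B ^ t.natDegree, fun u hu => ?_⟩
  calc ‖fiberProd t g u‖
      = ((t - C u).roots.map fun z => ‖g z‖).prod := norm_fiberProd t g u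
    _ ≤ ((t - C u).roots.map fun _ => B).prod := by
        refine Multiset.prod_map_le_prod_map₀ _ _ (fun z _ => norm_nonneg _) fun z hz => ?_
        have hz' : t.eval z ∈ s := by rwa [(mem_roots_sub_C ht).1 hz]
        simpa only [norm_one, mul_one] using hB z hz'
    _ = B ^ t.natDegree * ‖(1 : ℂ)‖ := by
        rw [Multiset.map_const', Multiset.prod_replicate,
          ← (IsAlgClosed.splits (t - C u)).natDegree_eq_card_roots, natDegree_sub_C, norm_one,
          mul_one]

lemma fiberProd_sub_const_isBigO {t : ℂ[X]} (ht : 0 < t.degree) (a : ℂ) (s : Set ℂ) :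
    fiberProd t (fun z => z - a) =O[𝓟 s] fun u => u - t.eval a := by
  refine Asymptotics.isBigO_principal.2 ⟨‖t.leadingCoeff‖⁻¹, fun u _ => ?_⟩
  have hlc : 0 < ‖t.leadingCoeff‖ :=
    norm_pos_iff.2 (leadingCoeff_ne_zero.2 (ne_zero_of_degree_gt ht))
  rw [norm_sub_rev, ← leadingCoeff_mul_fiberProd_const_sub ht, norm_mul,
    inv_mul_cancel_left₀ hlc.ne', norm_fiberProd, norm_fiberProd]
  simp only [norm_sub_rev, le_refl]

theorem fiberProd_prod_sub_mul_isBigO {t : ℂ[X]} (ht : 0 < t.degree) (S : Finset ℂ) {g : ℂ → ℂ}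
    (hg : Continuous g) {s : Set ℂ} (hs : Bornology.IsBounded s) :
    fiberProd t (fun z => (∏ a ∈ S, (z - a)) * g z) =O[𝓟 s]
      fun u => ∏ a ∈ S, (u - t.eval a) := by
  have hprod := Asymptotics.IsBigO.finsetProd
    (s := S) fun a _ => fiberProd_sub_const_isBigO ht a s
  refine (hprod.mul (fiberProd_isBigO_one ht hg hs)).congr (fun u => ?_) fun u => mul_one _
  rw [fiberProd_mul, fiberProd_finset_prod]

/-! ### Zeros and growth of entire functions -/

lemma exists_eq_sub_mul_of_differentiable {F : ℂ → ℂ} (hF : Differentiable ℂ F) {a : ℂ}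
    (ha : F a = 0) : ∃ G : ℂ → ℂ, Differentiable ℂ G ∧ ∀ z, F z = (z - a) * G z := by
  refine ⟨dslope F a, ?_, fun z => ?_⟩
  · rw [← differentiableOn_univ] at hF ⊢
    exact (Complex.differentiableOn_dslope Filter.univ_mem).2 hF
  · rw [← smul_eq_mul, sub_smul_dslope, ha, sub_zero]

lemma exists_eq_prod_sub_mul_of_differentiable (s : Finset ℂ) {F : ℂ → ℂ}
    (hF : Differentiable ℂ F) (hs : ∀ a ∈ s, F a = 0) :
    ∃ G : ℂ → ℂ, Differentiable ℂ G ∧ ∀ z, F z = (∏ a ∈ s, (z - a)) * G z := by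
  induction s using Finset.induction_on with
  | empty => exact ⟨F, hF, fun z => by rw [Finset.prod_empty, one_mul]⟩
  | insert a s ha ih =>
    obtain ⟨G, hG, hFG⟩ := ih fun b hb => hs b (Finset.mem_insert_of_mem hb)
    have hGa : G a = 0 := by
      have hFa := hs a (Finset.mem_insert_self a s)
      rw [hFG, mul_eq_zero, Finset.prod_eq_zero_iff] at hFa
      refine hFa.resolve_left ?_
      rintro ⟨b, hb, hab⟩
      exact ha (sub_eq_zero.1 hab ▸ hb)
    obtain ⟨H, hH, hGH⟩ := exists_eq_sub_mul_of_differentiable hG hGa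
    refine ⟨H, hH, fun z => ?_⟩
    rw [hFG, hGH, Finset.prod_insert ha]
    ring

lemma isBigO_of_sub_mul_isBigO {𝕜 : Type*} [NontriviallyNormedField 𝕜] {a : 𝕜} {U : Set 𝕜}
    (hU : IsOpen U) {G H : 𝕜 → 𝕜} (hG : Continuous G) (hH : Continuous H)
    (h : (fun z => (z - a) * G z) =O[𝓟 U] fun z => (z - a) * H z) : G =O[𝓟 U] H := by
  obtain ⟨C, hC⟩ := Asymptotics.isBigO_principal.1 h
  have hoff : ∀ z ∈ U ∩ {a}ᶜ, ‖G z‖ ≤ C * ‖H z‖ := by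
    rintro z ⟨hzU, hza⟩
    have hza : 0 < ‖z - a‖ := norm_pos_iff.2 (sub_ne_zero.2 hza)
    refine le_of_mul_le_mul_left ?_ hza
    simpa only [norm_mul, mul_left_comm C] using hC z hzU
  exact Asymptotics.isBigO_principal.2 ⟨C, fun z hz => le_on_closure hoff hG.norm.continuousOn
    (hH.norm.const_mul C).continuousOn ((dense_compl_singleton a).open_subset_closure_inter hU hz)⟩

/-- The numerator of the Blaschke factor of the disc of radius `r` with zero `a`: an entire
function with the modulus of `z - a` on the circle `‖z‖ = r`. -/
noncomputable def blaschkeNumerator (r : ℝ) (a z : ℂ) : ℂ :=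
  (r ^ 2 - conj a * z) / r

lemma differentiable_blaschkeNumerator (r : ℝ) (a : ℂ) :
    Differentiable ℂ (blaschkeNumerator r a) := by
  unfold blaschkeNumerator
  fun_prop

lemma norm_blaschkeNumerator_of_norm_eq {r : ℝ} (hr : 0 < r) (a : ℂ) {z : ℂ} (hz : ‖z‖ = r) :
    ‖blaschkeNumerator r a z‖ = ‖z - a‖ := by
  have hnum : (r : ℂ) ^ 2 - conj a * z = z * conj (z - a) := by
    rw [map_sub, mul_sub, Complex.mul_conj, Complex.normSq_eq_norm_sq, hz, Complex.ofReal_pow]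
    ring
  rw [blaschkeNumerator, hnum, norm_div, norm_mul, Complex.norm_conj, hz, Complex.norm_real,
    Real.norm_of_nonneg hr.le, mul_div_cancel_left₀ _ hr.ne']

lemma mul_norm_sub_le_norm_blaschkeNumerator {ρ r : ℝ} (hρ : 0 < ρ) (hr : ρ ≤ r) {a z : ℂ}
    (ha : ‖a‖ ≤ ρ) (hz : ‖z‖ ≤ ρ) :
    (r ^ 2 - ρ ^ 2) / (2 * r * ρ) * ‖z - a‖ ≤ ‖blaschkeNumerator r a z‖ := by
  have hr0 : 0 < r := hρ.trans_le hr
  have hsub : ‖z - a‖ ≤ 2 * ρ := (norm_sub_le _ _).trans (by linarith)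
  have hnum : r ^ 2 - ρ ^ 2 ≤ ‖(r : ℂ) ^ 2 - conj a * z‖ := by
    have hprod : ‖conj a * z‖ ≤ ρ ^ 2 := by
      rw [norm_mul, Complex.norm_conj, sq]
      gcongr
    have hr2 : ‖(r : ℂ) ^ 2‖ = r ^ 2 := by
      rw [norm_pow, Complex.norm_real, Real.norm_of_nonneg hr0.le]
    linarith [norm_sub_norm_le ((r : ℂ) ^ 2) (conj a * z)]
  have hnonneg : 0 ≤ r ^ 2 - ρ ^ 2 := sub_nonneg.2 (by gcongr)
  calc (r ^ 2 - ρ ^ 2) / (2 * r * ρ) * ‖z - a‖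
      ≤ (r ^ 2 - ρ ^ 2) / (2 * r * ρ) * (2 * ρ) := by gcongr
    _ = (r ^ 2 - ρ ^ 2) / r := by field_simp
    _ ≤ ‖(r : ℂ) ^ 2 - conj a * z‖ / r := by gcongr
    _ = ‖blaschkeNumerator r a z‖ := by
        rw [blaschkeNumerator, norm_div, Complex.norm_real, Real.norm_of_nonneg hr0.le]

/-- The points `p i` may coincide: `hzeros` says that `F` vanishes there with multiplicity.
Replacing one factor `z - p i` of `F` by its Blaschke numerator keeps the bound on the circle and
enlarges `F` on the small disc. -/
theorem pow_card_mul_norm_le_of_isBigO_prod_sub {ι : Type*} (s : Finset ι) (p : ι → ℂ) {ρ r M : ℝ}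
    (hρ : 0 < ρ) (hr : ρ < r) (hp : ∀ i ∈ s, ‖p i‖ ≤ ρ) {F : ℂ → ℂ} (hF : Differentiable ℂ F)
    (hzeros : F =O[𝓟 (ball 0 r)] fun z => ∏ i ∈ s, (z - p i))
    (hM : ∀ z ∈ sphere (0 : ℂ) r, ‖F z‖ ≤ M) {u : ℂ} (hu : u ∈ closedBall 0 ρ) :
    ((r ^ 2 - ρ ^ 2) / (2 * r * ρ)) ^ s.card * ‖F u‖ ≤ M := by
  classical
  have hr0 : 0 < r := hρ.trans hr
  have hu : ‖u‖ ≤ ρ := mem_closedBall_zero_iff.1 hu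
  induction s using Finset.induction_on generalizing F with
  | empty =>
    rw [Finset.card_empty, pow_zero, one_mul]
    exact Complex.norm_le_of_forall_mem_frontier_norm_le isBounded_ball hF.diffContOnCl
      (fun z hz => hM z (frontier_ball_subset_sphere hz))
      (subset_closure (mem_ball_zero_iff.2 (hu.trans_lt hr)))
  | insert i s hi ih =>
    have hpi : ‖p i‖ ≤ ρ := hp i (Finset.mem_insert_self i s)
    simp only [Finset.prod_insert hi] at hzeros
    have hFi : F (p i) = 0 := by
      obtain ⟨C, hC⟩ := Asymptotics.isBigO_principal.1 hzeros
      simpa using hC (p i) (mem_ball_zero_iff.2 (hpi.trans_lt hr))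
    obtain ⟨G, hG, hFG⟩ := exists_eq_sub_mul_of_differentiable hF hFi
    obtain rfl : F = fun z => (z - p i) * G z := funext hFG
    have hB := differentiable_blaschkeNumerator r (p i)
    have hBG : (fun z => blaschkeNumerator r (p i) z * G z) =O[𝓟 (ball 0 r)]
        fun z => ∏ j ∈ s, (z - p j) := by
      have hGs := isBigO_of_sub_mul_isBigO isOpen_ball hG.continuous
        (continuous_finsetProd s fun j _ => continuous_sub_right (p j)) hzeros
      simpa only [one_mul] using
        (isBigO_one_principal_of_isBounded hB.continuous isBounded_ball).mul hGs
    have hBM (z : ℂ) (hz : z ∈ sphere 0 r) : ‖blaschkeNumerator r (p i) z * G z‖ ≤ M := by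
      rw [norm_mul, norm_blaschkeNumerator_of_norm_eq hr0 _ (mem_sphere_zero_iff_norm.1 hz),
        ← norm_mul]
      exact hM z hz
    have hind := ih (fun j hj => hp j (Finset.mem_insert_of_mem hj)) (hB.fun_mul hG) hBG hBM
    have hq : 0 ≤ (r ^ 2 - ρ ^ 2) / (2 * r * ρ) :=
      div_nonneg (sub_nonneg.2 (by gcongr)) (by positivity)
    refine le_trans ?_ hind
    rw [Finset.card_insert_of_notMem hi, pow_succ, norm_mul, norm_mul, mul_assoc,
      ← mul_assoc _ _ ‖G u‖]
    gcongr
    exact mul_norm_sub_le_norm_blaschkeNumerator hρ hr.le hpi hu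

theorem pow_card_le_of_aeval_entireDeriv_eq_zero {ι : Type*} (s : Finset ι) (a : ι → ℂ)
    {p : ℂ[X]} (hp : p.Monic) {Δ ρ κ : ℝ} (hΔ : 0 ≤ Δ) (hroots : ∀ w ∈ p.roots, ‖w‖ ≤ Δ)
    (hρ : 0 < ρ) (hκ : 1 < κ) {F : entireFunctions} (hF : aeval entireDeriv p F = 0)
    (hne : ∃ u ∈ closedBall (0 : ℂ) ρ, F.1 u ≠ 0) (ha : ∀ i ∈ s, ‖a i‖ ≤ ρ)
    (hzeros : F.1 =O[𝓟 (ball 0 (κ * ρ))] fun u => ∏ i ∈ s, (u - a i)) :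
    ((κ ^ 2 - 1) / (2 * κ)) ^ s.card ≤
      Real.exp (Δ * (ρ + κ * ρ)) * ∑ i ∈ Finset.range p.natDegree, κ ^ i := by
  obtain ⟨u₀, hu₀, hmax⟩ := (isCompact_closedBall (0 : ℂ) ρ).exists_isMaxOn
    ⟨0, mem_closedBall_self hρ.le⟩ F.2.continuous.norm.continuousOn
  have hM (z : ℂ) (hz : z ∈ closedBall (0 : ℂ) ρ) : ‖F.1 z‖ ≤ ‖F.1 u₀‖ := hmax hz
  have hM0 : 0 < ‖F.1 u₀‖ := by
    obtain ⟨u, hu, hFu⟩ := hne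
    exact (norm_pos_iff.2 hFu).trans_le (hM u hu)
  have hgrowth (z : ℂ) (hz : z ∈ sphere (0 : ℂ) (κ * ρ)) :
      ‖F.1 z‖ ≤ ‖F.1 u₀‖ * Real.exp (Δ * (ρ + κ * ρ)) *
        ∑ i ∈ Finset.range p.natDegree, κ ^ i := by
    simpa only [mem_sphere_zero_iff_norm.1 hz, mul_div_cancel_right₀ κ hρ.ne'] using
      norm_le_of_aeval_entireDeriv_eq_zero hp hΔ hroots hρ hF hM z
  have hblaschke := pow_card_mul_norm_le_of_isBigO_prod_sub s a hρ (lt_mul_of_one_lt_left hρ hκ) ha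
    F.2 hzeros hgrowth hu₀
  have hratio : ((κ * ρ) ^ 2 - ρ ^ 2) / (2 * (κ * ρ) * ρ) = (κ ^ 2 - 1) / (2 * κ) := by
    field_simp
  rw [hratio, mul_comm, mul_assoc] at hblaschke
  exact le_of_mul_le_mul_left hblaschke hM0

lemma le_four_mul_add_of_pow_le_exp_mul_sum {m N x : ℕ} {y : ℝ} (hx : 1 ≤ x) (hy : 0 ≤ y)
    (hN : N ≤ 2 * x + 1)
    (h : (12 / 5 : ℝ) ^ m ≤ Real.exp (3 * y) * ∑ i ∈ Finset.range N, (5 : ℝ) ^ i) :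
    (m : ℝ) ≤ 4 * (x + y) := by
  have hgeom : ∑ i ∈ Finset.range N, (5 : ℝ) ^ i ≤ (12 / 5) ^ (4 * (x : ℝ)) := by
    calc ∑ i ∈ Finset.range N, (5 : ℝ) ^ i
        ≤ ∑ i ∈ Finset.range (2 * x + 1), (5 : ℝ) ^ i :=
          Finset.sum_le_sum_of_subset_of_nonneg (Finset.range_subset_range.2 hN)
            fun _ _ _ => by positivity
      _ ≤ 5 * 5 ^ (2 * x) / 4 := by
          rw [geom_sum_eq (by norm_num), pow_succ']
          linarith
      _ ≤ (5 / 4) ^ x * 5 ^ (2 * x) := by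
          have := pow_le_pow_right₀ (by norm_num : (1 : ℝ) ≤ 5 / 4) hx
          nlinarith [pow_pos (by norm_num : (0 : ℝ) < 5) (2 * x)]
      _ = (125 / 4) ^ x := by
          rw [pow_mul, ← mul_pow]
          norm_num
      _ ≤ ((12 / 5) ^ 4) ^ x := by
          gcongr
          norm_num
      _ = (12 / 5) ^ (4 * (x : ℝ)) := by
          rw [← pow_mul, ← Real.rpow_natCast]
          norm_num
  have hexp : Real.exp (3 * y) ≤ (12 / 5) ^ (4 * y) := by
    have hexp3 : Real.exp 3 ≤ (12 / 5) ^ (4 : ℝ) := by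
      rw [show (3 : ℝ) = ((3 : ℕ) : ℝ) * 1 by norm_num, Real.exp_nat_mul]
      refine (pow_le_pow_left₀ (Real.exp_nonneg 1) Real.exp_one_lt_d9.le 3).trans ?_
      norm_num
    rw [Real.exp_mul, Real.rpow_mul (by norm_num)]
    gcongr
  refine (Real.rpow_le_rpow_left_iff (by norm_num : (1 : ℝ) < 12 / 5)).1 ?_
  calc (12 / 5 : ℝ) ^ (m : ℝ)
      ≤ Real.exp (3 * y) * ∑ i ∈ Finset.range N, (5 : ℝ) ^ i := by rwa [Real.rpow_natCast]
    _ ≤ (12 / 5) ^ (4 * y) * (12 / 5) ^ (4 * (x : ℝ)) := by gcongr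
    _ = (12 / 5) ^ (4 * (x + y)) := by
        rw [← Real.rpow_add (by norm_num)]
        ring_nf

lemma finite_inter_zeros_of_differentiable {f : ℂ → ℂ} (hf : Differentiable ℂ f)
    (hne : ∃ z, f z ≠ 0) {K : Set ℂ} (hK : Bornology.IsBounded K) : (K ∩ {z | f z = 0}).Finite := by
  by_contra hinf
  obtain ⟨x, -, hx⟩ := Set.Infinite.exists_accPt_of_subset_isCompact hinf hK.isCompact_closure
    (Set.inter_subset_left.trans subset_closure)
  obtain ⟨z, hz⟩ := hne
  have han : AnalyticOnNhd ℂ f Set.univ := hf.differentiableOn.analyticOnNhd isOpen_univ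
  exact hz <| han.eqOn_zero_of_preconnected_of_frequently_eq_zero isPreconnected_univ
    (Set.mem_univ x) ((accPt_iff_frequently_nhdsNE.1 hx).mono fun z hz => hz.2) (Set.mem_univ z)

lemma exists_fiberProd_ne_zero {t : ℂ[X]} (ht : 0 < t.degree) {f : ℂ → ℂ}
    (hf : Differentiable ℂ f) (hne : ∃ z, f z ≠ 0) {s : Set ℂ} (hs : Bornology.IsBounded s)
    (hinf : s.Infinite) : ∃ u ∈ s, fiberProd t f u ≠ 0 := by
  by_contra! hzero
  refine hinf (((finite_inter_zeros_of_differentiable hf hne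
    (isBounded_preimage_eval ht hs)).image fun z => t.eval z).subset fun u hu => ?_)
  obtain ⟨z, hzu, hfz⟩ := (fiberProd_eq_zero_iff ht).1 (hzero u hu)
  have hzs : t.eval z ∈ s := by rwa [hzu]
  exact ⟨z, ⟨hzs, hfz⟩, hzu⟩

/-! ### Restriction to an exponential curve -/

/-- The entire function `z ↦ P (z, exp (t z))`: the restriction of `P` to the exponential curve
`w = exp (t z)`. -/
noncomputable def restrictExpCurve (t : ℂ[X]) (P : MvPolynomial (Fin 2) ℂ) (z : ℂ) : ℂ :=
  MvPolynomial.eval ![z, Complex.exp (t.eval z)] P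

lemma differentiable_restrictExpCurve (t : ℂ[X]) (P : MvPolynomial (Fin 2) ℂ) :
    Differentiable ℂ (restrictExpCurve t P) := by
  unfold restrictExpCurve
  simp only [MvPolynomial.eval_eq', Fin.prod_univ_two, Matrix.cons_val_zero, Matrix.cons_val_one]
  have := t.differentiable
  fun_prop

lemma restrictExpCurve_sub_C_eq_zero_iff {t : ℂ[X]} {P : MvPolynomial (Fin 2) ℂ} {c z : ℂ} :
    restrictExpCurve t (P - MvPolynomial.C c) z = 0 ↔
      MvPolynomial.eval ![z, Complex.exp (t.eval z)] P = c := by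
  rw [restrictExpCurve, map_sub, MvPolynomial.eval_C, sub_eq_zero]

/-- The polynomial `P (X, exp u)`, whose coefficients are functions of `u`. -/
noncomputable def expSpecialization (P : MvPolynomial (Fin 2) ℂ) : (ℂ → ℂ)[X] :=
  ∑ s ∈ P.support, monomial (s 0) (P.coeff s • (expMonomial 0 (s 1)).1)

lemma eval_map_evalRingHom_expSpecialization (P : MvPolynomial (Fin 2) ℂ) (z u : ℂ) :
    ((expSpecialization P).map (Pi.evalRingHom (fun _ => ℂ) u)).eval z =
      MvPolynomial.eval ![z, Complex.exp u] P := by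
  rw [expSpecialization, Polynomial.map_sum, eval_finsetSum, MvPolynomial.eval_eq']
  refine Finset.sum_congr rfl fun s _ => ?_
  simp only [expMonomial, map_monomial, eval_monomial, Pi.evalRingHom_apply, Pi.smul_apply,
    smul_eq_mul, Fin.prod_univ_two, Matrix.cons_val_zero, Matrix.cons_val_one, pow_zero, one_mul,
    Complex.exp_nat_mul]
  ring

lemma add_le_totalDegree_of_mem_support {R : Type*} [CommSemiring R] {P : MvPolynomial (Fin 2) R}
    {s : Fin 2 →₀ ℕ} (hs : s ∈ P.support) : s 0 + s 1 ≤ P.totalDegree := by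
  have := MvPolynomial.le_totalDegree hs
  rwa [Finsupp.sum_fintype _ _ fun _ => rfl, Fin.sum_univ_two] at this

lemma natDegree_expSpecialization_le (P : MvPolynomial (Fin 2) ℂ) :
    (expSpecialization P).natDegree ≤ P.totalDegree :=
  natDegree_sum_le_of_forall_le _ _ fun _ hs => (natDegree_monomial_le _).trans <|
    (Nat.le_add_right _ _).trans (add_le_totalDegree_of_mem_support hs)

lemma coeff_expSpecialization_mem (d : ℕ) (P : MvPolynomial (Fin 2) ℂ) {n : ℕ}
    (hP : P.totalDegree ≤ n) (k : ℕ) :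
    (expSpecialization P).coeff k ∈ expPolyFiltration d ((n : ℤ) - k) := by
  rw [expSpecialization, finsetSum_coeff]
  refine sum_mem fun s hs => ?_
  rw [coeff_monomial]
  split_ifs with hk
  · refine Submodule.smul_mem _ _ (expMonomial_mem_expPolyFiltration ?_)
    have := add_le_totalDegree_of_mem_support hs
    push_cast
    omega
  · exact zero_mem _

lemma coeff_map_algebraMap_sub_C_id_mem (t : ℂ[X]) {k : ℕ} (hk : k ≤ t.natDegree) :
    (t.map (algebraMap ℂ (ℂ → ℂ)) - C id).coeff k ∈
      expPolyFiltration t.natDegree ((t.natDegree : ℤ) - k) := by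
  rw [coeff_sub, coeff_map, coeff_C]
  refine sub_mem (algebraMap_mem_expPolyFiltration (by omega) _) ?_
  split_ifs with hk0
  · have hid : (expMonomial 1 (0 : ℕ)).1 = id := by
      funext u
      simp [expMonomial]
    rw [← hid]
    exact expMonomial_mem_expPolyFiltration (by simp [hk0])
  · exact zero_mem _

/-- The left hand side is the resultant in `X` of `t - u` and `P (X, exp u)`. -/
theorem leadingCoeff_pow_mul_fiberProd_restrictExpCurve_mem {t : ℂ[X]} (ht : 0 < t.degree)
    {P : MvPolynomial (Fin 2) ℂ} {n : ℕ} (hP : P.totalDegree ≤ n) :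
    (fun u => t.leadingCoeff ^ n * fiberProd t (restrictExpCurve t P) u) ∈
      expPolyFiltration t.natDegree (t.natDegree * n : ℕ) := by
  set T : (ℂ → ℂ)[X] := t.map (algebraMap ℂ (ℂ → ℂ)) - C id
  have hmem := resultant_mem_of_coeff_mem (expPolyFiltration t.natDegree)
    (fun k hk => coeff_map_algebraMap_sub_C_id_mem t hk)
    (fun k (_ : k ≤ n) => coeff_expSpecialization_mem t.natDegree P hP k)
  have hweight : (n * t.natDegree + t.natDegree * n - t.natDegree * n : ℤ) =
      (t.natDegree * n : ℕ) := by
    push_cast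
    ring
  rw [hweight] at hmem
  convert hmem using 1
  funext u
  set g := (expSpecialization P).map (Pi.evalRingHom (fun _ => ℂ) u)
  have hT : T.map (Pi.evalRingHom (fun _ => ℂ) u) = t - C u := by
    rw [Polynomial.map_sub, Polynomial.map_map, map_C]
    exact congrArg (· - C u) Polynomial.map_id
  have hg : g.natDegree ≤ n :=
    natDegree_map_le.trans ((natDegree_expSpecialization_le P).trans hP)
  calc t.leadingCoeff ^ n * fiberProd t (restrictExpCurve t P) u
      = t.leadingCoeff ^ n * fiberProd t (fun z => g.eval z) u := by
        congr 1
        refine fiberProd_congr ht fun z hz => ?_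
        rw [eval_map_evalRingHom_expSpecialization, restrictExpCurve, hz]
    _ = resultant (t - C u) g t.natDegree n := leadingCoeff_pow_mul_fiberProd_eval ht hg u
    _ = resultant T (expSpecialization P) t.natDegree n u := by
        rw [← hT]
        exact resultant_map_map _ _ _ _ (Pi.evalRingHom (fun _ => ℂ) u)

lemma fiberProd_isBigO_prod_sub {t : ℂ[X]} (ht : 0 < t.degree) {f : ℂ → ℂ}
    (hf : Differentiable ℂ f) {S : Finset ℂ} (hS : ∀ a ∈ S, f a = 0) {s : Set ℂ}
    (hs : Bornology.IsBounded s) :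
    fiberProd t f =O[𝓟 s] fun u => ∏ a ∈ S, (u - t.eval a) := by
  obtain ⟨g, hg, hfg⟩ := exists_eq_prod_sub_mul_of_differentiable S hf hS
  rw [funext hfg]
  exact fiberProd_prod_sub_mul_isBigO ht S hg.continuous hs

theorem card_zeros_restrictExpCurve_le {t : ℂ[X]} (ht : 1 ≤ t.natDegree)
    {P : MvPolynomial (Fin 2) ℂ} {n : ℕ} (hn : 1 ≤ n) (hP : P.totalDegree ≤ n)
    (hne : ∃ z, restrictExpCurve t P z ≠ 0) {ρ : ℝ} (hρ : 0 < ρ) {S : Finset ℂ}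
    (hS : ∀ z ∈ S, ‖t.eval z‖ ≤ ρ ∧ restrictExpCurve t P z = 0) :
    (S.card : ℝ) ≤ 4 * (t.natDegree * n ^ 2 + t.natDegree * n * ρ) := by
  have htdeg : 0 < t.degree := natDegree_pos_iff_degree_pos.1 ht
  have hlc : t.leadingCoeff ≠ 0 := leadingCoeff_ne_zero.2 (ne_zero_of_degree_gt htdeg)
  have hfdiff := differentiable_restrictExpCurve t P
  obtain ⟨F, hF, hFQ⟩ := exists_aeval_expPolyAnnihilator_eq_zero ht
    (leadingCoeff_pow_mul_fiberProd_restrictExpCurve_mem htdeg hP)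
  have hFne : ∃ u ∈ closedBall (0 : ℂ) ρ, F.1 u ≠ 0 := by
    obtain ⟨u, hu, hfu⟩ := exists_fiberProd_ne_zero htdeg hfdiff hne isBounded_closedBall
      (infinite_of_mem_nhds (0 : ℂ) (closedBall_mem_nhds 0 hρ))
    refine ⟨u, hu, ?_⟩
    rw [hFQ]
    exact mul_ne_zero (Complex.exp_ne_zero _) (mul_ne_zero (pow_ne_zero n hlc) hfu)
  have hFzeros : F.1 =O[𝓟 (ball 0 (5 * ρ))] fun u => ∏ a ∈ S, (u - t.eval a) := by
    have hfactor : Continuous fun u =>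
        Complex.exp (-((t.natDegree * n : ℕ) / 2) * u) * t.leadingCoeff ^ n := by fun_prop
    refine ((isBigO_one_principal_of_isBounded hfactor isBounded_ball).mul
      (fiberProd_isBigO_prod_sub htdeg hfdiff (fun z hz => (hS z hz).2) isBounded_ball)).congr
      (fun u => ?_) fun u => one_mul _
    rw [hFQ, mul_assoc]
  have hcount := pow_card_le_of_aeval_entireDeriv_eq_zero S (fun a => t.eval a)
    (monic_expPolyAnnihilator _ _) (by positivity)
    (fun w hw => norm_le_of_mem_roots_expPolyAnnihilator hw) hρ (by norm_num) hF hFne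
    (fun z hz => (hS z hz).1) hFzeros
  have hnum : (12 / 5 : ℝ) ^ S.card ≤ Real.exp (3 * (t.natDegree * n * ρ)) *
      ∑ i ∈ Finset.range (expPolyAnnihilator t.natDegree (t.natDegree * n)).natDegree, 5 ^ i := by
    convert hcount using 2
    · norm_num
    · push_cast
      ring_nf
  exact_mod_cast le_four_mul_add_of_pow_le_exp_mul_sum (Nat.mul_pos ht (pow_pos hn 2))
    (by positivity) (natDegree_expPolyAnnihilator_mul_le ht hn) hnum

/-! ### The Bernstein-Walsh inequality for discs -/

/-- On the complement of the disc, `t.eval z = z ^ t.natDegree * t.reverse.eval z⁻¹`; apply the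
maximum principle to `t.reverse`. -/
lemma norm_eval_le_of_norm_le_on_closedBall_zero {t : ℂ[X]} {r R M : ℝ} (hr : 0 < r) (hrR : r ≤ R)
    (hM : ∀ z ∈ closedBall (0 : ℂ) r, ‖t.eval z‖ ≤ M) {z : ℂ} (hz : z ∈ closedBall (0 : ℂ) R) :
    ‖t.eval z‖ ≤ (R / r) ^ t.natDegree * M := by
  have hM0 : 0 ≤ M := (norm_nonneg _).trans (hM 0 (mem_closedBall_self hr.le))
  have hreverse (w : ℂ) (hw : w ≠ 0) : t.reverse.eval w⁻¹ * w ^ t.natDegree = t.eval w := by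
    let := invertibleOfNonzero hw
    simpa only [invOf_eq_inv, eval₂_id] using! eval₂_reverse_mul_pow (RingHom.id ℂ) w t
  by_cases hzr : ‖z‖ ≤ r
  · refine (hM z (mem_closedBall_zero_iff.2 hzr)).trans (le_mul_of_one_le_left hM0 ?_)
    exact one_le_pow₀ ((one_le_div hr).2 hrR)
  have hzr : r < ‖z‖ := not_le.1 hzr
  have hbound : ‖t.reverse.eval z⁻¹‖ ≤ M / r ^ t.natDegree := by
    refine Complex.norm_le_of_forall_mem_frontier_norm_le (U := ball (0 : ℂ) r⁻¹) isBounded_ball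
      t.reverse.differentiable.diffContOnCl (fun v hv => ?_) (subset_closure ?_)
    · have hv : ‖v‖ = r⁻¹ := mem_sphere_zero_iff_norm.1 (frontier_ball_subset_sphere hv)
      have hv' : ‖v⁻¹‖ = r := by rw [norm_inv, hv, inv_inv]
      have hMv := hM v⁻¹ (mem_closedBall_zero_iff.2 hv'.le)
      rw [← hreverse v⁻¹ (norm_pos_iff.1 (hv'.symm ▸ hr)), inv_inv, norm_mul, norm_pow, hv'] at hMv
      exact (le_div_iff₀ (pow_pos hr _)).2 hMv
    · rw [mem_ball_zero_iff, norm_inv]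
      exact inv_strictAnti₀ hr hzr
  rw [← hreverse z (norm_pos_iff.1 (hr.trans hzr)), norm_mul, norm_pow]
  calc ‖t.reverse.eval z⁻¹‖ * ‖z‖ ^ t.natDegree
      ≤ M / r ^ t.natDegree * R ^ t.natDegree := by
        have := mem_closedBall_zero_iff.1 hz
        gcongr
    _ = (R / r) ^ t.natDegree * M := by
        rw [div_pow]
        ring

theorem norm_eval_le_of_norm_le_on_closedBall {t : ℂ[X]} {z₀ : ℂ} {r R M : ℝ} (hr : 0 < r)
    (hrR : r ≤ R) (hM : ∀ z ∈ closedBall z₀ r, ‖t.eval z‖ ≤ M) {z : ℂ}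
    (hz : z ∈ closedBall z₀ R) : ‖t.eval z‖ ≤ (R / r) ^ t.natDegree * M := by
  have heval (w : ℂ) : (t.comp (X + C z₀)).eval w = t.eval (w + z₀) := by
    rw [eval_comp, eval_add, eval_X, eval_C]
  have hcentre := norm_eval_le_of_norm_le_on_closedBall_zero (t := t.comp (X + C z₀)) hr hrR
    (fun w hw => by
      rw [heval]
      exact hM _ (by rwa [mem_closedBall, dist_add_self_left, ← mem_closedBall_zero_iff]))
    (z := z - z₀) (by rwa [mem_closedBall_zero_iff, ← dist_eq_norm])
  rwa [heval, sub_add_cancel, natDegree_comp, natDegree_X_add_C, mul_one] at hcentre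

lemma norm_eval_le_sSup_closedBall (t : ℂ[X]) {z₀ : ℂ} {r : ℝ} {z : ℂ} (hz : z ∈ closedBall z₀ r) :
    ‖t.eval z‖ ≤ sSup ((fun z => ‖t.eval z‖) '' closedBall z₀ r) :=
  le_csSup ((isCompact_closedBall z₀ r).image t.continuous.norm).bddAbove ⟨z, hz, rfl⟩

lemma sSup_norm_eval_closedBall_pos {t : ℂ[X]} (ht : t ≠ 0) (z₀ : ℂ) {r : ℝ} (hr : 0 < r) :
    0 < sSup ((fun z => ‖t.eval z‖) '' closedBall z₀ r) := by
  have hinf := infinite_of_mem_nhds z₀ (closedBall_mem_nhds z₀ hr)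
  obtain ⟨z, hz, hroot⟩ := hinf.exists_notMem_finite (finite_setOfPred_isRoot ht)
  exact (norm_pos_iff.2 hroot).trans_le (norm_eval_le_sSup_closedBall t hz)

end

/-- Valency bound for `P(z, e^{t(z)})`: there is an absolute constant
`A ≤ 4` such that for every polynomial `t` of degree `d ≥ 1`, every disk
`{|z - z₀| ≤ R}` with `R ≥ R₀ > 0`, every `P` of total degree at most `n ≥ 1` and every
value `c` (not identically attained), the number of solutions of `P(z, e^{t(z)}) = c`
in the disk is at most `A (d n² + d n (R/R₀)^d max_{|z-z₀|≤R₀} |t(z)|)`. -/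
theorem valency_bound_exponential_curve :
    ∃ A : ℝ, 0 < A ∧ A ≤ 4 ∧
      ∀ t : Polynomial ℂ, 1 ≤ t.natDegree →
      ∀ z₀ : ℂ, ∀ R₀ R : ℝ, 0 < R₀ → R₀ ≤ R →
      ∀ n : ℕ, 1 ≤ n → ∀ P : MvPolynomial (Fin 2) ℂ, P.totalDegree ≤ n → ∀ c : ℂ,
        (∃ z : ℂ, MvPolynomial.eval ![z, Complex.exp (t.eval z)] P ≠ c) →
        ∃ S : Finset ℂ,
          (∀ z ∈ Metric.closedBall z₀ R,
            MvPolynomial.eval ![z, Complex.exp (t.eval z)] P = c → z ∈ S) ∧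
          (S.card : ℝ) ≤ A * ((t.natDegree : ℝ) * (n : ℝ) ^ 2 +
            (t.natDegree : ℝ) * (n : ℝ) * (R / R₀) ^ t.natDegree *
              sSup ((fun z : ℂ => ‖t.eval z‖) '' Metric.closedBall z₀ R₀)) := by
  refine ⟨4, by norm_num, le_rfl, fun t ht z₀ R₀ R hR₀ hR n hn P hP c ⟨z₁, hz₁⟩ => ?_⟩
  set M := sSup ((fun z : ℂ => ‖t.eval z‖) '' Metric.closedBall z₀ R₀)
  have hM : 0 < M :=
    sSup_norm_eval_closedBall_pos (Polynomial.ne_zero_of_natDegree_gt ht) z₀ hR₀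
  have hR' : 0 < R := hR₀.trans_le hR
  have hne : ∃ z, restrictExpCurve t (P - MvPolynomial.C c) z ≠ 0 :=
    ⟨z₁, mt restrictExpCurve_sub_C_eq_zero_iff.1 hz₁⟩
  have hfin := finite_inter_zeros_of_differentiable (differentiable_restrictExpCurve t _) hne
    (Metric.isBounded_closedBall (x := z₀) (r := R))
  refine ⟨hfin.toFinset, fun z hz hzc => ?_, ?_⟩
  · exact hfin.mem_toFinset.2 ⟨hz, restrictExpCurve_sub_C_eq_zero_iff.2 hzc⟩
  · rw [mul_assoc (_ * _ : ℝ)]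
    refine card_zeros_restrictExpCurve_le ht hn ((MvPolynomial.totalDegree_sub_C_le P c).trans hP)
      hne (by positivity) fun z hz => ?_
    obtain ⟨hzR, hfz⟩ := hfin.mem_toFinset.1 hz
    exact ⟨norm_eval_le_of_norm_le_on_closedBall hR₀ hR
      (fun w hw => norm_eval_le_sSup_closedBall t hw) hzR, hfz⟩
end
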